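/- arXiv:1907.00964 — 2 statements merged into one kernel-verified Lean document; each statement's English description precedes it below -/
import Mathlib

section
/- There exist arbitrarily large n for which there is a tournament on n vertices that contains no copy of the unavoidable 2-tournament 𝒰₂ and is (log n)/(5n)-far from being transitive; that is, every linear ordering of its vertex set has at least n·(log n)/5 backward edges (log denoting the natural logarithm). -/
/-!
Double a tournament `T` by placing a reversed copy of `T` after it and turning back the perfect
matching formed by the edges between the two copies of each vertex. A second-half vertex then has
only one out-neighbour in the first half, and a first-half vertex only one in-neighbour in the
second. Hence a copy of `𝒰₂` meeting both halves meets both of them in every class, and following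
the matching edges around the three classes produces an edge of `T` in both directions. As `𝒰₂` is
isomorphic to its reverse, doubling therefore creates no new `𝒰₂`.

An ordering of the double restricts to orderings of both halves, and at least `|V| - 1` further
backward edges run between the halves. Indeed, a matching edge is backward unless its second-half
end comes first. If `m` pairs are of the latter kind, the earliest of their second-half vertices
precedes the first-half vertices of the other `m - 1` pairs, all of which point to it. Thus `d`
doublings of a single vertex force `n (log₂ n / 2 - 1) + 1` backward edges, where `n = 2 ^ d`, and
`1 / 5 < 1 / (2 log 2)`.
-/

/-- `T` is a tournament: an orientation of the complete graph. -/
def IsTournament {V : Type*} (T : V → V → Prop) : Prop :=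
  (∀ x, ¬ T x x) ∧ ∀ x y, x ≠ y → (T x y ↔ ¬ T y x)

/-- The unavoidable `t`-tournament `𝒰_t` on `Fin 3 × Fin t`: three transitive classes
of order `t`, with all edges from class `i` to class `i + 1` (mod 3). -/
def UPat (t : ℕ) (p q : Fin 3 × Fin t) : Prop :=
  (p.1 = q.1 ∧ p.2 < q.2) ∨ q.1 = p.1 + 1

/-- `T` contains a copy of the unavoidable `t`-tournament `𝒰_t`. -/
def ContainsU {V : Type*} (T : V → V → Prop) (t : ℕ) : Prop :=
  ∃ f : Fin 3 × Fin t → V, Function.Injective f ∧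
    ∀ p q : Fin 3 × Fin t, UPat t p q → T (f p) (f q)

/-- The number of backward edges of the ordering `σ` of the vertices of `T`
(position `k` is occupied by the vertex `σ k`). -/
noncomputable def backCount {n : ℕ} {V : Type*} (T : V → V → Prop) (σ : Fin n ≃ V) : ℕ :=
  {p : Fin n × Fin n | p.1 < p.2 ∧ T (σ p.2) (σ p.1)}.ncard

open Finset

variable {V W α : Type*} {T : V → V → Prop} {t : ℕ}

section Tournaments

lemma IsTournament.asymm (hT : IsTournament T) {x y : V} (hxy : T x y) : ¬ T y x := by
  have hne : x ≠ y := by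
    rintro rfl
    exact hT.1 x hxy
  exact (hT.2 x y hne).1 hxy

lemma IsTournament.comap (hT : IsTournament T) {f : W → V} (hf : f.Injective) :
    IsTournament fun x y ↦ T (f x) (f y) :=
  ⟨fun x ↦ hT.1 (f x), fun _ _ hxy ↦ hT.2 _ _ (hf.ne hxy)⟩

lemma ContainsU.of_comap {f : W → V} (hf : f.Injective)
    (h : ContainsU (fun x y ↦ T (f x) (f y)) t) : ContainsU T t := by
  obtain ⟨g, hg, hedge⟩ := h
  exact ⟨f ∘ g, hf.comp hg, hedge⟩

lemma UPat.neg_rev {p q : Fin 3 × Fin t} (h : UPat t p q) :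
    UPat t (-q.1, q.2.rev) (-p.1, p.2.rev) := by
  rcases h with ⟨hclass, hlt⟩ | hnext
  · exact .inl ⟨congrArg Neg.neg hclass.symm, Fin.rev_lt_rev.2 hlt⟩
  · exact .inr (by simp [hnext])

lemma ContainsU.of_flip (h : ContainsU (flip T) t) : ContainsU T t := by
  obtain ⟨f, hf, hedge⟩ := h
  exact ⟨f ∘ Prod.map Neg.neg Fin.rev, hf.comp (neg_injective.prodMap Fin.rev_injective),
    fun _ _ hpq ↦ hedge _ _ hpq.neg_rev⟩

end Tournaments

section Double

/-- The double of `T`: a copy of `T` followed by a reversed copy of `T`. All edges go from the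
first copy to the second, except that the edges joining the two copies of a vertex of `T` point
back to the first copy. -/
def doubleTournament (T : V → V → Prop) : V ⊕ V → V ⊕ V → Prop
  | .inl x, .inl y => T x y
  | .inr x, .inr y => T y x
  | .inl x, .inr y => x ≠ y
  | .inr x, .inl y => x = y

lemma IsTournament.double (hT : IsTournament T) : IsTournament (doubleTournament T) := by
  refine ⟨?_, ?_⟩
  · rintro (x | x) <;> exact hT.1 x
  · rintro (x | x) (y | y) hxy <;> simp only [doubleTournament]
    · exact hT.2 x y (by simpa using hxy)
    · rw [ne_eq, eq_comm]
    · rw [ne_eq, not_not, eq_comm]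
    · exact hT.2 y x (by simpa [eq_comm] using hxy)

lemma isRight_or_isRight_of_doubleTournament {u v w : V ⊕ V} (hu : u.isRight) (hvw : v ≠ w)
    (huv : doubleTournament T u v) (huw : doubleTournament T u w) : v.isRight ∨ w.isRight := by
  rw [← Sum.not_isLeft, ← Sum.not_isLeft, ← not_and_or]
  simp only [Sum.isLeft_iff, Sum.isRight_iff] at hu ⊢
  rintro ⟨⟨y, rfl⟩, z, rfl⟩
  obtain ⟨x, rfl⟩ := hu
  exact hvw (congrArg Sum.inl (Eq.trans (Eq.symm huv) huw))

lemma isLeft_or_isLeft_of_doubleTournament {u v w : V ⊕ V} (hu : u.isLeft) (hvw : v ≠ w)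
    (hvu : doubleTournament T v u) (hwu : doubleTournament T w u) : v.isLeft ∨ w.isLeft := by
  rw [← Sum.not_isRight, ← Sum.not_isRight, ← not_and_or]
  simp only [Sum.isLeft_iff, Sum.isRight_iff] at hu ⊢
  rintro ⟨⟨y, rfl⟩, z, rfl⟩
  obtain ⟨x, rfl⟩ := hu
  exact hvw (congrArg Sum.inr (Eq.trans hvu (Eq.symm hwu)))

lemma forall_fin_three_of_imp_add_one {P : Fin 3 → Prop} (hP : ∀ i, P i → P (i + 1)) {i : Fin 3}
    (hi : P i) (j : Fin 3) : P j := by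
  obtain rfl | rfl | rfl : j = i ∨ j = i + 1 ∨ j = i + 1 + 1 := by
    clear hP hi
    decide +revert
  exacts [hi, hP _ hi, hP _ (hP _ hi)]

section CyclicBlowup

variable {f : Fin 3 × Fin t → V ⊕ V}

lemma exists_isRight_of_isRight (ht : 2 ≤ t) (hf : f.Injective)
    (hedge : ∀ i s s', doubleTournament T (f (i, s)) (f (i + 1, s'))) {p : Fin 3 × Fin t}
    (hp : (f p).isRight) (i : Fin 3) : ∃ s, (f (i, s)).isRight := by
  have : Nontrivial (Fin t) := Fin.nontrivial_iff_two_le.2 ht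
  obtain ⟨s₁, s₂, hs⟩ := exists_pair_ne (Fin t)
  refine forall_fin_three_of_imp_add_one (P := fun j ↦ ∃ s, (f (j, s)).isRight) ?_ ⟨p.2, hp⟩ i
  rintro j ⟨s, hs_right⟩
  obtain h | h := isRight_or_isRight_of_doubleTournament hs_right
    (hf.ne (by simp [hs])) (hedge j s s₁) (hedge j s s₂)
  exacts [⟨s₁, h⟩, ⟨s₂, h⟩]

lemma exists_isLeft_of_isLeft (ht : 2 ≤ t) (hf : f.Injective)
    (hedge : ∀ i s s', doubleTournament T (f (i, s)) (f (i + 1, s'))) {p : Fin 3 × Fin t}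
    (hp : (f p).isLeft) (i : Fin 3) : ∃ s, (f (i, s)).isLeft := by
  have : Nontrivial (Fin t) := Fin.nontrivial_iff_two_le.2 ht
  obtain ⟨s₁, s₂, hs⟩ := exists_pair_ne (Fin t)
  by_contra hi
  refine forall_fin_three_of_imp_add_one (P := fun j ↦ ¬ ∃ s, (f (j, s)).isLeft) ?_ hi p.1 ⟨p.2, hp⟩
  rintro j hj ⟨s, hs_left⟩
  obtain h | h := isLeft_or_isLeft_of_doubleTournament hs_left
    (hf.ne (by simp [hs])) (hedge j s₁ s) (hedge j s₂ s)
  exacts [hj ⟨s₁, h⟩, hj ⟨s₂, h⟩]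

lemma IsTournament.not_forall_isLeft_and_forall_isRight (hT : IsTournament T)
    (hedge : ∀ i s s', doubleTournament T (f (i, s)) (f (i + 1, s'))) :
    ¬ ((∀ i, ∃ s, (f (i, s)).isLeft) ∧ ∀ i, ∃ s, (f (i, s)).isRight) := by
  simp only [Sum.isLeft_iff, Sum.isRight_iff]
  rintro ⟨hleft, hright⟩
  choose a x hx using hleft
  choose b y hy using hright
  have hmatch (i : Fin 3) : y i = x (i + 1) := by
    simpa only [hx, hy, doubleTournament] using hedge i (b i) (a (i + 1))
  have hfirst : T (x 0) (x 1) := by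
    simpa only [hx, zero_add, doubleTournament] using hedge 0 (a 0) (a 1)
  have hsecond : T (y 0) (y 2) := by
    simpa only [hy, Fin.reduceAdd, doubleTournament] using hedge 2 (b 2) (b 0)
  rw [hmatch 0, hmatch 2] at hsecond
  exact hT.asymm hfirst hsecond

end CyclicBlowup

theorem ContainsU.of_double (hT : IsTournament T) (ht : 2 ≤ t)
    (h : ContainsU (doubleTournament T) t) : ContainsU T t := by
  obtain ⟨f, hf, hU⟩ := h
  have hedge (i : Fin 3) (s s' : Fin t) : doubleTournament T (f (i, s)) (f (i + 1, s')) :=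
    hU _ _ (.inr rfl)
  by_cases hleft : ∃ p, (f p).isLeft
  · by_cases hright : ∃ p, (f p).isRight
    · obtain ⟨p, hp⟩ := hleft
      obtain ⟨q, hq⟩ := hright
      exact (hT.not_forall_isLeft_and_forall_isRight hedge
        ⟨exists_isLeft_of_isLeft ht hf hedge hp, exists_isRight_of_isRight ht hf hedge hq⟩).elim
    · simp only [not_exists, Sum.not_isRight, Sum.isLeft_iff] at hright
      choose g hg using hright
      obtain rfl : f = Sum.inl ∘ g := funext hg
      exact ⟨g, hf.of_comp, hU⟩
  · simp only [not_exists, Sum.not_isLeft, Sum.isRight_iff] at hleft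
    choose g hg using hleft
    obtain rfl : f = Sum.inr ∘ g := funext hg
    exact .of_flip ⟨g, hf.of_comp, hU⟩

end Double

section BackwardEdges

open Classical in
/-- The backward edges of `T` in the ordering of the vertices by increasing rank `r`. As in
`backCount`, such an edge is recorded as the pair `(u, v)` with `u` before `v`, although it is
directed from `v` to `u`. -/
noncomputable def backwardEdges [Fintype V] [LT α] (T : V → V → Prop) (r : V → α) :
    Finset (V × V) :=
  {p | r p.1 < r p.2 ∧ T p.2 p.1}

lemma mem_backwardEdges [Fintype V] [LT α] {r : V → α} {p : V × V} :
    p ∈ backwardEdges T r ↔ r p.1 < r p.2 ∧ T p.2 p.1 := by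
  simp [backwardEdges]

lemma card_backwardEdges_symm {n : ℕ} [Fintype V] (T : V → V → Prop) (σ : Fin n ≃ V) :
    #(backwardEdges T σ.symm) = backCount T σ := by
  classical
  rw [backCount, Set.ncard_eq_toFinset_card']
  refine (card_equiv (σ.prodCongr σ) fun p ↦ ?_).symm
  simp [mem_backwardEdges]

lemma card_backwardEdges_flip [Fintype V] [LT α] (T : V → V → Prop) (r : V → α) :
    #(backwardEdges (flip T) r) = #(backwardEdges T (OrderDual.toDual ∘ r)) := by
  refine card_equiv (Equiv.prodComm V V) fun p ↦ ?_
  rw [mem_backwardEdges, mem_backwardEdges]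
  rfl

lemma card_backwardEdges_double [Fintype V] [DecidableEq V] [LinearOrder α] (T : V → V → Prop)
    (r : V ⊕ V → α) :
    #(backwardEdges (doubleTournament T) r) =
      (#(backwardEdges T (r ∘ .inl)) + #{p : V × V | r (.inr p.1) < r (.inl p.2) ∧ p.2 ≠ p.1}) +
        (#{x | r (.inl x) < r (.inr x)} + #(backwardEdges (flip T) (r ∘ .inr))) := by
  have hmatching (x : V) : (if r (.inl x) < r (.inr x) then 1 else 0) =
      ∑ y, if r (.inl x) < r (.inr y) ∧ y = x then 1 else 0 := by
    rw [sum_eq_single x (fun y _ hy ↦ if_neg fun h ↦ hy h.2) (by simp)]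
    simp only [and_true]
  simp only [backwardEdges, card_filter, Fintype.sum_prod_type, Fintype.sum_sum_type,
    sum_add_distrib, hmatching]
  congr!

lemma card_filter_gt_le_card_crossing_add_one [Fintype V] [DecidableEq V] [LinearOrder α]
    (p q : V → α) :
    #{x | q x < p x} ≤ #{z : V × V | q z.1 < p z.2 ∧ z.2 ≠ z.1} + 1 := by
  set K : Finset V := {x | q x < p x} with hK
  rcases K.eq_empty_or_nonempty with hempty | hne
  · simp [hempty]
  obtain ⟨x₀, hx₀, hmin⟩ := K.exists_min_image q hne
  rw [← card_erase_add_one hx₀]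
  gcongr
  refine card_le_card_of_injOn (x₀, ·) (fun y hy ↦ ?_) (Prod.mk_right_injective x₀).injOn
  obtain ⟨hy_ne, hy⟩ := mem_erase.1 hy
  have hlt : q y < p y := by simpa [hK] using hy
  simpa [hy_ne] using (hmin y hy).trans_lt hlt

lemma card_le_card_crossing_add_one [Fintype V] [DecidableEq V] [LinearOrder α] {p q : V → α}
    (hpq : ∀ x, p x ≠ q x) :
    Fintype.card V ≤ #{x | p x < q x} + #{z : V × V | q z.1 < p z.2 ∧ z.2 ≠ z.1} + 1 := by
  have hsplit : #{x | p x < q x} + #{x | q x < p x} = Fintype.card V := by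
    rw [← card_univ, ← card_filter_add_card_filter_not (s := univ) fun x ↦ p x < q x]
    simp only [not_lt, (hpq _).symm.le_iff_lt]
  have := card_filter_gt_le_card_crossing_add_one p q
  omega

theorem le_card_backwardEdges_double [Fintype V] [LinearOrder α] (T : V → V → Prop)
    {r : V ⊕ V → α} (hr : r.Injective) :
    #(backwardEdges T (r ∘ .inl)) + #(backwardEdges T (OrderDual.toDual ∘ r ∘ .inr)) +
      Fintype.card V ≤ #(backwardEdges (doubleTournament T) r) + 1 := by
  classical
  have hcross := card_le_card_crossing_add_one fun x ↦ hr.ne (Sum.inl_ne_inr (a := x) (b := x))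
  rw [card_backwardEdges_double, card_backwardEdges_flip]
  omega

end BackwardEdges

theorem exists_isTournament_card_eq_two_pow (d : ℕ) :
    ∃ (V : Type) (_ : Fintype V) (T : V → V → Prop), Fintype.card V = 2 ^ d ∧
      IsTournament T ∧ ¬ ContainsU T 2 ∧
        ∀ (α : Type) [LinearOrder α] (r : V → α), r.Injective →
          (2 : ℝ) ^ d * (d / 2 - 1) + 1 ≤ #(backwardEdges T r) := by
  induction d with
  | zero =>
    refine ⟨Unit, inferInstance, fun _ _ ↦ False, by simp, by simp [IsTournament], ?_, by simp⟩
    rintro ⟨f, -, hedge⟩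
    exact hedge (0, 0) (1, 0) (.inr rfl)
  | succ d ih =>
    obtain ⟨V, _, T, hcard, hT, hfree, hback⟩ := ih
    refine ⟨V ⊕ V, inferInstance, doubleTournament T, ?_, hT.double,
      fun h ↦ hfree (h.of_double hT le_rfl), fun α _ r hr ↦ ?_⟩
    · rw [Fintype.card_sum, hcard, pow_succ, mul_two]
    · have hfirst := hback α (r ∘ .inl) (hr.comp Sum.inl_injective)
      have hsecond := hback αᵒᵈ (OrderDual.toDual ∘ r ∘ .inr)
        (OrderDual.toDual.injective.comp (hr.comp Sum.inr_injective))
      have hdouble : (#(backwardEdges T (r ∘ .inl)) +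
          #(backwardEdges T (OrderDual.toDual ∘ r ∘ .inr)) + 2 ^ d : ℝ) ≤
            #(backwardEdges (doubleTournament T) r) + 1 := by
        exact_mod_cast hcard ▸ le_card_backwardEdges_double T hr
      calc (2 : ℝ) ^ (d + 1) * ((d + 1 : ℕ) / 2 - 1) + 1
          = 2 * (2 ^ d * (d / 2 - 1) + 1) + 2 ^ d - 1 := by push_cast; ring
        _ ≤ #(backwardEdges (doubleTournament T) r) := by linarith

lemma two_pow_mul_log_div_five_le {d : ℕ} (hd : 3 ≤ d) :
    (2 : ℝ) ^ d * Real.log (2 ^ d) / 5 ≤ 2 ^ d * (d / 2 - 1) + 1 := by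
  have hd' : (3 : ℝ) ≤ d := by exact_mod_cast hd
  have hlog : Real.log 2 ≤ 5 / 6 := by linarith [Real.log_two_lt_d9]
  have hfactor : d * Real.log 2 / 5 ≤ (d / 2 - 1 : ℝ) := by
    linarith [mul_le_mul_of_nonneg_left hlog d.cast_nonneg]
  calc (2 : ℝ) ^ d * Real.log (2 ^ d) / 5
      = 2 ^ d * (d * Real.log 2 / 5) := by rw [Real.log_pow, mul_div_assoc]
    _ ≤ 2 ^ d * (d / 2 - 1) := by gcongr
    _ ≤ 2 ^ d * (d / 2 - 1) + 1 := by linarith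

/-- **Claim (lower bound for `𝒟(2, δ)`).** There exist arbitrarily large `n` for which
there is an `n`-vertex tournament with no copy of `𝒰₂` in which every ordering of the
vertex set has at least `n·log n / 5` backward edges. -/
theorem statement17 :
    ∀ n₀ : ℕ, ∃ n : ℕ, n₀ ≤ n ∧
      ∃ T : Fin n → Fin n → Prop, IsTournament T ∧ ¬ ContainsU T 2 ∧
        ∀ σ : Equiv.Perm (Fin n),
          (n : ℝ) * Real.log (n : ℝ) / 5 ≤ (backCount T σ : ℝ) := by
  intro n₀
  obtain ⟨d, hn₀, hd⟩ : ∃ d, n₀ ≤ d ∧ 3 ≤ d := ⟨max n₀ 3, le_max_left _ _, le_max_right _ _⟩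
  obtain ⟨V, _, T, hcard, hT, hfree, hback⟩ := exists_isTournament_card_eq_two_pow d
  let e : Fin (2 ^ d) ≃ V := (Fintype.equivFinOfCardEq hcard).symm
  refine ⟨2 ^ d, hn₀.trans Nat.lt_two_pow_self.le, fun i j ↦ T (e i) (e j), hT.comap e.injective,
    fun h ↦ hfree (h.of_comap e.injective), fun σ ↦ ?_⟩
  calc ((2 ^ d : ℕ) : ℝ) * Real.log ((2 ^ d : ℕ) : ℝ) / 5
      ≤ 2 ^ d * (d / 2 - 1) + 1 := by exact_mod_cast two_pow_mul_log_div_five_le hd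
    _ ≤ #(backwardEdges T (σ.trans e).symm) := hback _ _ (σ.trans e).symm.injective
    _ = backCount T (σ.trans e) := by rw [card_backwardEdges_symm]
end

section
/- There exists an absolute constant C > 0 such that every tournament on n ≥ 2 vertices that is C(log n)²/n-far from being transitive — that is, every linear ordering of its vertex set has at least C·n·(log n)² backward edges — contains a copy of the unavoidable 2-tournament 𝒰₂. -/
/-!
Order a `𝒰₂`-free tournament with as few backward edges as possible and look at the backward edges
of length about `s`. Many directed triangles through each of several vertices produce a copy of
`𝒰₂`, so a pivot as in quicksort can be chosen in few triangles, and every vertex set has an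
ordering with a small fraction of backward edges. By optimality so does each interval of the given
ordering; hence a heavy vertex, one with many backward edges at distance at most `4 * s`, lies in
many triangles, and only boundedly many vertices of an interval of length `2 * s` are heavy.

Two light vertices `p, p'` and two light vertices `q, q'` cannot be joined by four backward edges of
length about `s`, because almost every vertex between them would follow `p, p'` and precede `q, q'`.
Therefore, by halving intervals, a set in which each vertex has at most one forward edge has only
logarithmically many vertices in an interval. If a backward edge `x → y` is such that `y` has two
forward edges to light heads of backward edges from `x`, and `x` receives two forward edges from
light tails of backward edges to `y`, then these six vertices form `𝒰₂`. Only `O(log n)` of the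
edges leaving `x` fail the first condition and only `O(log n)` of those entering `y` fail the
second. Every backward edge fails one of them, so there are `O(n log n)` backward edges at each of
the `O(log n)` scales.
-/

open Finset

section SetFamilies

variable {ι Ω : Type*} [DecidableEq Ω] {R : Finset ι} {U : Finset Ω}
  {S : ι → Finset Ω}

lemma sum_card_eq_sum_card_filter_mem (hS : ∀ i ∈ R, S i ⊆ U) :
    ∑ i ∈ R, #(S i) = ∑ x ∈ U, #{i ∈ R | x ∈ S i} := by
  calc ∑ i ∈ R, #(S i) = ∑ i ∈ R, #{x ∈ U | x ∈ S i} :=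
        sum_congr rfl fun i hi => by rw [filter_mem_eq_inter, inter_eq_right.2 (hS i hi)]
    _ = ∑ x ∈ U, #{i ∈ R | x ∈ S i} :=
        sum_card_bipartiteAbove_eq_sum_card_bipartiteBelow fun i x => x ∈ S i

/-- Summing `(d - k) * (d - k - 1) ≥ 0` over the degrees `d` of the points of `U`. -/
lemma two_mul_sum_card_le_add_sum_card_inter (hS : ∀ i ∈ R, S i ⊆ U) (k : ℕ) :
    2 * k * ∑ i ∈ R, #(S i) ≤ k * (k + 1) * #U + ∑ p ∈ R.offDiag, #(S p.1 ∩ S p.2) := by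
  have hinter : ∀ p ∈ R.offDiag, S p.1 ∩ S p.2 ⊆ U := fun p hp =>
    inter_subset_left.trans (hS _ (mem_offDiag.1 hp).1)
  have hdegree (x : Ω) : 2 * k * #{i ∈ R | x ∈ S i} ≤
      k * (k + 1) + #{p ∈ R.offDiag | x ∈ S p.1 ∩ S p.2} := by
    have hpairs : {p ∈ R.offDiag | x ∈ S p.1 ∩ S p.2} = ({i ∈ R | x ∈ S i} : Finset ι).offDiag := by
      ext p
      simp only [mem_filter, mem_offDiag, mem_inter]
      tauto
    rw [hpairs, offDiag_card]
    generalize #{i ∈ R | x ∈ S i} = d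
    zify [Nat.le_mul_self d]
    rcases lt_or_ge k d with h | h
    · nlinarith [mul_nonneg (show (0 : ℤ) ≤ d - k - 1 by lia) (show (0 : ℤ) ≤ d - k by lia)]
    · nlinarith [mul_nonneg (show (0 : ℤ) ≤ k + 1 - d by lia) (show (0 : ℤ) ≤ k - d by lia)]
  rw [sum_card_eq_sum_card_filter_mem hS, sum_card_eq_sum_card_filter_mem hinter, mul_sum,
    mul_comm _ (#U), ← smul_eq_mul (#U), ← sum_const, ← sum_add_distrib]
  exact sum_le_sum fun x _ => hdegree x

lemma exists_ne_card_le_mul_card_inter {K : ℕ} (hK : 0 < K) (hR : 2 * K ≤ #R)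
    (hSU : ∀ i ∈ R, S i ⊆ U) (hS : ∀ i ∈ R, #U ≤ K * #(S i)) :
    ∃ i ∈ R, ∃ j ∈ R, i ≠ j ∧ #U ≤ 2 * K ^ 2 * #(S i ∩ S j) := by
  obtain ⟨P, hPR, hP⟩ := exists_subset_card_eq hR
  by_contra! hsmall
  have hpairs : #P.offDiag + 2 * K = 4 * K ^ 2 := by
    rw [offDiag_card, hP, Nat.sub_add_cancel (Nat.le_mul_self _)]
    ring
  have hupper : 2 * K ^ 2 * ∑ p ∈ P.offDiag, #(S p.1 ∩ S p.2) < #P.offDiag * #U := by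
    rw [mul_sum, ← smul_eq_mul (#P.offDiag), ← sum_const]
    refine sum_lt_sum_of_nonempty (card_pos.1 (by nlinarith)) fun p hp => ?_
    obtain ⟨hi, hj, hij⟩ := mem_offDiag.1 hp
    exact hsmall _ (hPR hi) _ (hPR hj) hij
  have hlower : 2 * #U ≤ ∑ i ∈ P, #(S i) := by
    have hsum : #P • #U ≤ ∑ i ∈ P, K * #(S i) := card_nsmul_le_sum _ _ _ fun i hi => hS i (hPR hi)
    rw [← mul_sum, hP, smul_eq_mul] at hsum
    nlinarith
  have hBonferroni := two_mul_sum_card_le_add_sum_card_inter (fun i hi => hSU i (hPR hi)) 1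
  nlinarith

/-- The Kővári–Sós–Turán bound for `K_{2,2}`. -/
lemma exists_ne_one_lt_card_inter {L : ℕ} (hRU : #R ≤ #U) (hR : L * (L + 1) < #R)
    (hSU : ∀ i ∈ R, S i ⊆ U) (hS : #R * #U ≤ L * ∑ i ∈ R, #(S i)) :
    ∃ i ∈ R, ∃ j ∈ R, i ≠ j ∧ 1 < #(S i ∩ S j) := by
  by_contra! hsmall
  have hinter : ∑ p ∈ R.offDiag, #(S p.1 ∩ S p.2) ≤ #R * #R := by
    calc ∑ p ∈ R.offDiag, #(S p.1 ∩ S p.2) ≤ #R.offDiag • 1 :=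
          sum_le_card_nsmul _ _ _ fun p hp => by
            obtain ⟨hi, hj, hij⟩ := mem_offDiag.1 hp
            exact hsmall _ hi _ hj hij
      _ ≤ #R * #R := by
        rw [smul_eq_mul, mul_one, offDiag_card]
        exact Nat.sub_le _ _
  have hBonferroni := two_mul_sum_card_le_add_sum_card_inter hSU L
  nlinarith [Nat.mul_le_mul_left (#R) hRU]

end SetFamilies

open scoped Classical

/-- The out-neighbours of `v` in `T` that lie in `W`. -/
noncomputable def outNbrs {V : Type*} (T : V → V → Prop) (W : Finset V) (v : V) : Finset V :=
  {w ∈ W | T v w}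

/-- The in-neighbours of `v` in `T` that lie in `W`. -/
noncomputable def inNbrs {V : Type*} (T : V → V → Prop) (W : Finset V) (v : V) : Finset V :=
  {w ∈ W | T w v}

/-- The pairs `(a, b)` in `W` for which `a → v → b → a` is a directed triangle of `T`. -/
noncomputable def trianglePairs {V : Type*} (T : V → V → Prop) (W : Finset V) (v : V) :
    Finset (V × V) :=
  {p ∈ W ×ˢ W | T p.1 v ∧ T v p.2 ∧ T p.2 p.1}

/-- The edges of `T` inside `W` that go backward with respect to the ranking `r`; such an edge is
recorded as the pair (head, tail), so that the first entry has the smaller rank. -/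
noncomputable def backPairs {V α : Type*} [LinearOrder α] (T : V → V → Prop) (W : Finset V)
    (r : V → α) : Finset (V × V) :=
  {p ∈ W ×ˢ W | r p.1 < r p.2 ∧ T p.2 p.1}

section Neighbours

variable {V : Type*} {T : V → V → Prop} {W : Finset V} {v w : V}

lemma mem_outNbrs : w ∈ outNbrs T W v ↔ w ∈ W ∧ T v w := mem_filter

lemma mem_inNbrs : w ∈ inNbrs T W v ↔ w ∈ W ∧ T w v := mem_filter

lemma mem_trianglePairs {p : V × V} :
    p ∈ trianglePairs T W v ↔ (p.1 ∈ W ∧ p.2 ∈ W) ∧ T p.1 v ∧ T v p.2 ∧ T p.2 p.1 := by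
  rw [trianglePairs, mem_filter, mem_product]

lemma trianglePairs_subset : trianglePairs T W v ⊆ W ×ˢ W := filter_subset _ _

lemma mem_backPairs {α : Type*} [LinearOrder α] {r : V → α} {p : V × V} :
    p ∈ backPairs T W r ↔ (p.1 ∈ W ∧ p.2 ∈ W) ∧ r p.1 < r p.2 ∧ T p.2 p.1 := by
  rw [backPairs, mem_filter, mem_product]

end Neighbours

namespace IsTournament

variable {V : Type*} {T : V → V → Prop}

lemma ne (hT : IsTournament T) {x y : V} (h : T x y) : x ≠ y := by
  rintro rfl
  exact hT.1 x h

lemma asymm_s18 (hT : IsTournament T) {x y : V} (h : T x y) : ¬ T y x :=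
  (hT.2 x y (hT.ne h)).1 h

lemma of_not (hT : IsTournament T) {x y : V} (hxy : x ≠ y) (h : ¬ T x y) : T y x :=
  (hT.2 y x hxy.symm).2 h

lemma total (hT : IsTournament T) {x y : V} (hxy : x ≠ y) : T x y ∨ T y x :=
  or_iff_not_imp_left.2 (hT.of_not hxy)

lemma swap (hT : IsTournament T) : IsTournament (Function.swap T) :=
  ⟨hT.1, fun x y hxy => hT.2 y x hxy.symm⟩

lemma comp_injective {U : Type*} (hT : IsTournament T) {f : U → V} (hf : f.Injective) :
    IsTournament fun x y => T (f x) (f y) :=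
  ⟨fun x => hT.1 (f x), fun _ _ hxy => hT.2 _ _ (hf.ne hxy)⟩

lemma mem_inNbrs_or_eq_or_mem_outNbrs (hT : IsTournament T) {W : Finset V} {x : V} (hx : x ∈ W)
    (v : V) : x ∈ inNbrs T W v ∨ x = v ∨ x ∈ outNbrs T W v := by
  rw [mem_inNbrs, mem_outNbrs]
  by_cases hxv : x = v
  · exact .inr (.inl hxv)
  · exact (hT.total hxv).imp (⟨hx, ·⟩) (.inr ⟨hx, ·⟩)

lemma disjoint_inNbrs_outNbrs (hT : IsTournament T) (W : Finset V) (v : V) :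
    Disjoint (inNbrs T W v) (outNbrs T W v) :=
  disjoint_filter.2 fun _ _ => hT.asymm_s18

lemma card_inNbrs_add_card_outNbrs (hT : IsTournament T) {W : Finset V} {v : V} (hv : v ∈ W) :
    #(inNbrs T W v) + #(outNbrs T W v) + 1 = #W := by
  have herase : inNbrs T W v ∪ outNbrs T W v = W.erase v := by
    ext x
    rw [mem_union, mem_inNbrs, mem_outNbrs, mem_erase, ← and_or_left, and_comm (a := x ≠ v)]
    exact and_congr_right fun _ => ⟨fun h => h.elim hT.ne fun h => (hT.ne h).symm, hT.total⟩
  rw [← card_union_of_disjoint (hT.disjoint_inNbrs_outNbrs W v), herase, card_erase_add_one hv]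

lemma two_mul_sum_card_outNbrs (hT : IsTournament T) (A : Finset V) :
    2 * ∑ v ∈ A, #(outNbrs T A v) = #A * (#A - 1) := by
  have hflip : ∑ v ∈ A, #(inNbrs T A v) = ∑ v ∈ A, #(outNbrs T A v) :=
    (sum_card_bipartiteAbove_eq_sum_card_bipartiteBelow T).symm
  calc 2 * ∑ v ∈ A, #(outNbrs T A v) = ∑ v ∈ A, (#(inNbrs T A v) + #(outNbrs T A v)) := by
        rw [sum_add_distrib, hflip, two_mul]
    _ = #A * (#A - 1) := sum_const_nat fun v hv => by
        rw [← hT.card_inNbrs_add_card_outNbrs hv, Nat.add_sub_cancel]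

lemma card_filter_card_outNbrs_lt (hT : IsTournament T) (W : Finset V) (d : ℕ) :
    #{v ∈ W | #(outNbrs T W v) < d} ≤ 2 * d := by
  set S := {v ∈ W | #(outNbrs T W v) < d}
  have hsum : ∑ v ∈ S, #(outNbrs T S v) + #S ≤ #S * d := by
    rw [card_eq_sum_ones S, ← sum_add_distrib, sum_mul, one_mul]
    refine sum_le_sum fun v hv => Nat.succ_le_of_lt (lt_of_le_of_lt ?_ (mem_filter.1 hv).2)
    exact card_le_card (filter_subset_filter _ (filter_subset _ _))
  have hpairs := hT.two_mul_sum_card_outNbrs S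
  obtain hS | hS := Nat.eq_zero_or_pos (#S)
  · lia
  · refine Nat.le_of_mul_le_mul_left ?_ hS
    zify [Nat.one_le_iff_ne_zero.2 hS.ne'] at *
    nlinarith

lemma containsU_two_of_ordered (hT : IsTournament T) {a a' b b' c c' : V}
    (haa : T a a') (hbb : T b b') (hcc : T c c')
    (ab : T a b) (ab' : T a b') (a'b : T a' b) (a'b' : T a' b')
    (bc : T b c) (bc' : T b c') (b'c : T b' c) (b'c' : T b' c')
    (ca : T c a) (ca' : T c a') (c'a : T c' a) (c'a' : T c' a') : ContainsU T 2 := by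
  let f : Fin 3 × Fin 2 → V := fun p => (![![a, a'], ![b, b'], ![c, c']] p.1) p.2
  have hf : ∀ p q, UPat 2 p q → T (f p) (f q) := by
    rintro ⟨i, x⟩ ⟨j, y⟩
    fin_cases i <;> fin_cases j <;> fin_cases x <;> fin_cases y <;> simp [UPat, f, *]
  have hcomparable : ∀ p q : Fin 3 × Fin 2, p ≠ q → UPat 2 p q ∨ UPat 2 q p := by
    unfold UPat
    decide
  refine ⟨f, fun p q hpq => by_contra fun hne => ?_, hf⟩
  rcases hcomparable p q hne with h | h
  · exact hT.ne (hf _ _ h) hpq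
  · exact hT.ne (hf _ _ h) hpq.symm

/-- A class of order two is transitive whichever way its edge points, so only the edges between
distinct classes matter. -/
lemma containsU_two (hT : IsTournament T) {a a' b b' c c' : V}
    (haa : a ≠ a') (hbb : b ≠ b') (hcc : c ≠ c')
    (ab : T a b) (ab' : T a b') (a'b : T a' b) (a'b' : T a' b')
    (bc : T b c) (bc' : T b c') (b'c : T b' c) (b'c' : T b' c')
    (ca : T c a) (ca' : T c a') (c'a : T c' a) (c'a' : T c' a') : ContainsU T 2 := by
  rcases hT.total haa with h | h <;> rcases hT.total hbb with h' | h' <;>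
    rcases hT.total hcc with h'' | h'' <;>
    apply hT.containsU_two_of_ordered h h' h'' <;> assumption

/-- Two vertices `v ≠ v'` share a dense set of triangle pairs, which contains a rectangle
`{a, a'} × {b, b'}`; then `{a, a'} → {v, v'} → {b, b'} → {a, a'}`. -/
lemma containsU_two_of_trianglePairs (hT : IsTournament T) {K : ℕ} (hK : 0 < K) {W P : Finset V}
    (hW : 6 * K ^ 4 < #W) (hP : 2 * K ≤ #P)
    (htri : ∀ v ∈ P, #W ^ 2 ≤ K * #(trianglePairs T W v)) : ContainsU T 2 := by
  obtain ⟨v, -, v', -, hvv, hcommon⟩ := exists_ne_card_le_mul_card_inter hK hP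
    (fun v _ => trianglePairs_subset) fun v hv => by rw [card_product, ← sq]; exact htri v hv
  let B (a : V) : Finset V := {b ∈ W | (a, b) ∈ trianglePairs T W v ∩ trianglePairs T W v'}
  have hfibres : #(trianglePairs T W v ∩ trianglePairs T W v') = ∑ a ∈ W, #(B a) := by
    rw [← inter_eq_right.2 (inter_subset_left.trans trianglePairs_subset), ← filter_mem_eq_inter,
      card_filter, sum_product]
    simp only [B, card_filter]
  rw [card_product, hfibres] at hcommon
  obtain ⟨a, -, a', -, haa, hBB⟩ := exists_ne_one_lt_card_inter (L := 2 * K ^ 2) le_rfl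
    (by nlinarith [Nat.pow_le_pow_right hK (show 2 ≤ 4 by norm_num)])
    (fun a _ => filter_subset _ _) hcommon
  obtain ⟨b, hb, b', hb', hbb⟩ := one_lt_card.1 hBB
  simp only [mem_inter, mem_filter, mem_trianglePairs] at hb hb'
  apply hT.containsU_two haa hvv hbb <;> tauto

end IsTournament

/-- The error coefficient in `IsTournament.exists_rank`: `Q` times the size up to which any ranking
will do. -/
def rankError (Q : ℕ) : ℕ := Q * (6 * (27 * Q + 1) ^ 4 + 4 * (27 * Q + 1) + 64)

lemma le_rankError (Q : ℕ) : Q ≤ rankError Q := Nat.le_mul_of_pos_right _ (by positivity)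

namespace IsTournament

variable {V : Type*} {T : V → V → Prop}

lemma exists_pivot (hT : IsTournament T) (hU : ¬ ContainsU T 2) {K : ℕ} (hK : 0 < K) {W : Finset V}
    (hW : 6 * K ^ 4 + 4 * K + 64 < #W) :
    ∃ v ∈ W, K * #(trianglePairs T W v) < #W ^ 2 ∧
      #W ≤ 9 * #(inNbrs T W v) ∧ #W ≤ 9 * #(outNbrs T W v) := by
  let d := (#W + 8) / 9
  let manyTriangles := {v ∈ W | #W ^ 2 ≤ K * #(trianglePairs T W v)}
  let fewIn := {v ∈ W | #(inNbrs T W v) < d}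
  let fewOut := {v ∈ W | #(outNbrs T W v) < d}
  have htri : #manyTriangles < 2 * K := by
    by_contra! hmany
    exact hU (hT.containsU_two_of_trianglePairs hK (by lia) hmany fun v hv => (mem_filter.1 hv).2)
  have hin : #fewIn ≤ 2 * d := hT.swap.card_filter_card_outNbrs_lt W d
  have hout : #fewOut ≤ 2 * d := hT.card_filter_card_outNbrs_lt W d
  have hcard : #(manyTriangles ∪ (fewIn ∪ fewOut)) < #W := by
    grw [card_union_le, card_union_le]
    lia
  obtain ⟨v, hvW, hv⟩ := exists_mem_notMem_of_card_lt_card hcard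
  simp only [manyTriangles, fewIn, fewOut, mem_union, mem_filter, hvW, true_and, not_or, not_le,
    not_lt] at hv
  exact ⟨v, hvW, hv.1, by lia, by lia⟩

/-- Rank the in-neighbours of `v` by `r₁`, then `v`, then the out-neighbours of `v` by `r₂`: an edge
of the second kind going back to the first closes a directed triangle with `v`. -/
lemma exists_rank_of_pivot (hT : IsTournament T) {W : Finset V} {v : V} {r₁ r₂ : V → ℕ}
    (hr₁ : Set.InjOn r₁ (inNbrs T W v)) (hr₂ : Set.InjOn r₂ (outNbrs T W v)) :
    ∃ r : V → ℕ, Set.InjOn r W ∧ #(backPairs T W r) ≤ #(trianglePairs T W v) +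
      (#(backPairs T (inNbrs T W v) r₁) + #(backPairs T (outNbrs T W v) r₂)) := by
  set A := inNbrs T W v
  set B := outNbrs T W v
  let m := A.sup r₁ + 1
  let r (x : V) : ℕ := if x ∈ A then r₁ x else if x = v then m else m + 1 + r₂ x
  have hvA : v ∉ A := fun h => hT.1 v (mem_inNbrs.1 h).2
  have hrA : ∀ x ∈ A, r x = r₁ x ∧ r x < m := fun x hx => by
    have hr : r x = r₁ x := if_pos hx
    exact ⟨hr, hr ▸ Nat.lt_succ_of_le (le_sup hx)⟩
  have hrB : ∀ x ∈ B, r x = m + 1 + r₂ x := fun x hx => by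
    have hxA : x ∉ A := fun h => disjoint_left.1 (hT.disjoint_inNbrs_outNbrs W v) h hx
    have hxv : x ≠ v := (hT.ne (mem_outNbrs.1 hx).2).symm
    exact (if_neg hxA).trans (if_neg hxv)
  refine ⟨r, fun x hx y hy hxy => ?_, ?_⟩
  · rcases hT.mem_inNbrs_or_eq_or_mem_outNbrs hx v with h | h | h <;>
      rcases hT.mem_inNbrs_or_eq_or_mem_outNbrs hy v with h' | h' | h' <;>
      grind [Set.InjOn]
  · grw [← card_union_le, ← card_union_le]
    refine card_le_card fun p hp => ?_
    obtain ⟨⟨hx, hy⟩, hlt, hyx⟩ := mem_backPairs.1 hp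
    have hxy : ¬ T p.1 p.2 := hT.asymm_s18 hyx
    simp only [mem_union, mem_trianglePairs, mem_backPairs]
    rcases hT.mem_inNbrs_or_eq_or_mem_outNbrs hx v with h | h | h <;>
      rcases hT.mem_inNbrs_or_eq_or_mem_outNbrs hy v with h' | h' | h' <;>
      grind [mem_inNbrs, mem_outNbrs]

lemma exists_rank (hT : IsTournament T) (hU : ¬ ContainsU T 2) (Q : ℕ) (W : Finset V) :
    ∃ r : V → ℕ, Set.InjOn r W ∧ Q * #(backPairs T W r) ≤ #W ^ 2 + rankError Q * #W := by
  induction hw : #W using Nat.strong_induction_on generalizing W with | _ w ih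
  set N := 6 * (27 * Q + 1) ^ 4 + 4 * (27 * Q + 1) + 64 with hN
  rcases le_or_gt w N with hwN | hwN
  · obtain ⟨r, hr⟩ := Set.countable_iff_exists_injOn.1 W.countable_toSet
    refine ⟨r, hr, ?_⟩
    calc Q * #(backPairs T W r) ≤ Q * (#W * #W) := by
          rw [← card_product]
          exact Nat.mul_le_mul_left _ (card_le_card (filter_subset _ _))
      _ ≤ Q * (N * w) := by rw [hw]; gcongr
      _ ≤ w ^ 2 + rankError Q * w := by rw [rankError, ← hN, mul_assoc]; exact Nat.le_add_left _ _
  · rw [← hw] at hwN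
    obtain ⟨v, hvW, htri, hin, hout⟩ := hT.exists_pivot hU (Nat.succ_pos (27 * Q)) hwN
    have hcard := hT.card_inNbrs_add_card_outNbrs hvW
    obtain ⟨r₁, hr₁, hback₁⟩ := ih _ (by lia) (inNbrs T W v) rfl
    obtain ⟨r₂, hr₂, hback₂⟩ := ih _ (by lia) (outNbrs T W v) rfl
    obtain ⟨r, hr, hback⟩ := hT.exists_rank_of_pivot hr₁ hr₂
    refine ⟨r, hr, ?_⟩
    rw [hw] at *
    generalize #(inNbrs T W v) = a, #(outNbrs T W v) = b at *
    have hbalanced : w ^ 2 ≤ 27 * (a * b) := by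
      have hw₂ : 2 ≤ w := by lia
      zify at hin hout hcard hw₂ ⊢
      nlinarith [mul_nonneg (sub_nonneg.2 hin) (sub_nonneg.2 hout)]
    have htri' : Q * #(trianglePairs T W v) ≤ a * b := by lia
    calc Q * #(backPairs T W r)
        ≤ Q * #(trianglePairs T W v) + (Q * #(backPairs T (inNbrs T W v) r₁) +
            Q * #(backPairs T (outNbrs T W v) r₂)) := by
          rw [← mul_add, ← mul_add]
          exact Nat.mul_le_mul_left _ hback
      _ ≤ a * b + ((a ^ 2 + rankError Q * a) + (b ^ 2 + rankError Q * b)) := by gcongr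
      _ ≤ w ^ 2 + rankError Q * w := by rw [← hcard]; nlinarith [Nat.zero_le (a * b)]

end IsTournament

open scoped Pointwise

/-- The tournament on `ℤ` obtained from `T` by reversing both the edges and the order of the
vertices, so that it has the same backward edges up to reflection. -/
def mirror (T : ℤ → ℤ → Prop) (x y : ℤ) : Prop := T (-y) (-x)

section Mirror

variable {T : ℤ → ℤ → Prop}

lemma IsTournament.mirror (hT : IsTournament T) : IsTournament (mirror T) :=
  (hT.comp_injective neg_injective).swap

/-- `𝒰_t` is isomorphic to its reverse. -/
lemma ContainsU.of_mirror {t : ℕ} (h : ContainsU (mirror T) t) : ContainsU T t := by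
  obtain ⟨f, hf, hedge⟩ := h
  refine ⟨fun p => -f (-p.1, p.2.rev), fun p q hpq => ?_, fun p q hpq => hedge _ _ ?_⟩
  · simpa [Prod.ext_iff] using hf (neg_injective hpq)
  · exact hpq.imp (by simp +contextual) (by simp +contextual)

lemma neg_Ico_eq (u w : ℤ) : -Ico u w = Ico (1 - w) (1 - u) := by
  ext x
  simp only [mem_neg', mem_Ico]
  lia

lemma outNbrs_mirror (W : Finset ℤ) (v : ℤ) :
    outNbrs (mirror T) W v = -inNbrs T (-W) (-v) := by
  ext x
  simp only [mem_neg', mem_outNbrs, mem_inNbrs, neg_neg, mirror]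

lemma card_backPairs_mirror (W : Finset ℤ) (r : ℤ → ℤ) :
    #(backPairs (mirror T) W r) = #(backPairs T (-W) fun x => -r (-x)) := by
  refine card_nbij' (fun p => (-p.2, -p.1)) (fun p => (-p.2, -p.1)) ?_ ?_ ?_ ?_ <;> intro p hp
  · simpa [mem_backPairs, mirror, and_comm (a := p.2 ∈ W)] using hp
  · simpa [mem_backPairs, mirror, and_comm (a := -p.2 ∈ W)] using hp
  all_goals simp

end Mirror

/-- `T` is a `𝒰₂`-free tournament on `ℤ` which the natural order of `ℤ` ranks optimally, in that on
every interval it has the least possible number of backward edges. -/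
structure IsFreeMedian (T : ℤ → ℤ → Prop) : Prop where
  isTournament : IsTournament T
  free : ¬ ContainsU T 2
  minimal : ∀ (u w : ℤ) (r : ℤ → ℤ), Set.InjOn r (Ico u w) →
    #(backPairs T (Ico u w) id) ≤ #(backPairs T (Ico u w) r)

/-- The vertex `v` has many out-neighbours among the `4 * s` vertices preceding it. -/
def LeftHeavy (T : ℤ → ℤ → Prop) (s : ℕ) (v : ℤ) : Prop :=
  s < 8 * #(outNbrs T (Ico (v - 4 * s) v) v)

/-- The vertex `v` has many in-neighbours among the `4 * s` vertices following it. -/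
def RightHeavy (T : ℤ → ℤ → Prop) (s : ℕ) (v : ℤ) : Prop :=
  s < 8 * #(inNbrs T (Ioc v (v + 4 * s)) v)

lemma mirror_mirror (T : ℤ → ℤ → Prop) : mirror (mirror T) = T := by
  ext x y
  rw [mirror, mirror, neg_neg, neg_neg]

lemma leftHeavy_mirror {T : ℤ → ℤ → Prop} {s : ℕ} {v : ℤ} :
    LeftHeavy (mirror T) s v ↔ RightHeavy T s (-v) := by
  have hinterval : -Ico (v - 4 * s) v = Ioc (-v) (-v + 4 * s) := by
    ext x
    simp only [mem_neg', mem_Ico, mem_Ioc]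
    lia
  rw [LeftHeavy, RightHeavy, outNbrs_mirror, card_neg, hinterval]

lemma rightHeavy_mirror {T : ℤ → ℤ → Prop} {s : ℕ} {v : ℤ} :
    RightHeavy (mirror T) s v ↔ LeftHeavy T s (-v) := by
  rw [← neg_neg v, ← leftHeavy_mirror, mirror_mirror, neg_neg]

/-- Both the scale from which heavy vertices are controlled and the bound on their number in an
interval: a heavy vertex at scale `s` forms at least `s ^ 2 / 512` triangles with the `(6 * s) ^ 2`
pairs of a surrounding interval, and `18432 = 36 * 512`. -/
@[irreducible]
def heavyConst : ℕ := 18432 ^ 4 + 6 * rankError 36864 + 1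

lemma le_heavyConst : 36864 ≤ heavyConst := by
  have := le_rankError 36864
  rw [heavyConst]
  lia

namespace IsFreeMedian

variable {T : ℤ → ℤ → Prop}

lemma mirror (h : IsFreeMedian T) : IsFreeMedian (mirror T) where
  isTournament := h.isTournament.mirror
  free hU := h.free hU.of_mirror
  minimal u w r hr := by
    rw [card_backPairs_mirror, card_backPairs_mirror, neg_Ico_eq]
    simp only [id, neg_neg]
    refine h.minimal _ _ _ fun x hx y hy hxy => ?_
    rw [mem_coe, mem_Ico] at hx hy
    exact neg_injective (hr (by simp; lia) (by simp; lia) (neg_injective hxy))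

/-- Otherwise moving `v` in front of the interval would save backward edges. -/
lemma card_outNbrs_le_card_inNbrs (h : IsFreeMedian T) (w v : ℤ) :
    #(outNbrs T (Ico w v) v) ≤ #(inNbrs T (Ico w v) v) := by
  rcases lt_or_ge v w with hvw | -
  · rw [outNbrs, inNbrs, Ico_eq_empty_of_le hvw.le, filter_empty, filter_empty]
  let r (x : ℤ) : ℤ := if x = v then w - 1 else x
  have hr : Set.InjOn r (Ico w (v + 1)) := fun x hx y hy hxy => by
    simp only [coe_Ico, Set.mem_Ico, r] at hx hy hxy
    grind
  have hlower : #(backPairs T (Ico w v) id) + #(outNbrs T (Ico w v) v) ≤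
      #(backPairs T (Ico w (v + 1)) id) := by
    rw [← mul_one (#(outNbrs T _ v)), ← card_singleton v, ← card_product, ← card_union_of_disjoint]
    · refine card_le_card fun p hp => ?_
      simp only [mem_union, mem_product, mem_singleton, mem_backPairs, mem_outNbrs, mem_Ico,
        id] at hp ⊢
      grind
    · refine disjoint_left.2 fun p hp hp' => ?_
      simp only [mem_product, mem_singleton, mem_backPairs, mem_Ico] at hp hp'
      lia
  have hupper : #(backPairs T (Ico w (v + 1)) r) ≤
      #(backPairs T (Ico w v) id) + #(inNbrs T (Ico w v) v) := by
    rw [← one_mul (#(inNbrs T _ v)), ← card_singleton v, ← card_product]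
    grw [← card_union_le]
    refine card_le_card fun p hp => ?_
    simp only [mem_union, mem_product, mem_singleton, mem_backPairs, mem_inNbrs, mem_Ico, id,
      r] at hp ⊢
    grind
  have := h.minimal w (v + 1) r hr
  lia

lemma card_backPairs_Ico_le (h : IsFreeMedian T) (u : ℤ) (N : ℕ) :
    36864 * #(backPairs T (Ico u (u + N)) id) ≤ N ^ 2 + rankError 36864 * N := by
  obtain ⟨r, hr, hback⟩ := h.isTournament.exists_rank h.free 36864 (Ico u (u + N))
  have hcast : backPairs T (Ico u (u + N)) (fun x => (r x : ℤ)) = backPairs T (Ico u (u + N)) r :=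
    filter_congr fun p _ => by rw [Nat.cast_lt]
  have hminimal := h.minimal u (u + N) (fun x => r x) fun x hx y hy hxy =>
    hr hx hy (Nat.cast_injective hxy)
  rw [hcast] at hminimal
  rw [Int.card_Ico, add_sub_cancel_left, Int.toNat_natCast] at hback
  exact (Nat.mul_le_mul_left _ hminimal).trans hback

/-- For out-neighbours `a < b` of `v` before `v`, count the in-neighbours of `v` between `a` and `v`
instead of `b`: each of them forms a triangle with `a` and `v` or sends a backward edge to `a`. -/
lemma card_outNbrs_mul_le (h : IsFreeMedian T) {w v : ℤ} {I : Finset ℤ} (hI : Ico w v ⊆ I) :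
    #(outNbrs T (Ico w v) v) * (#(outNbrs T (Ico w v) v) - 1) ≤
      2 * (#(trianglePairs T I v) + #(backPairs T I id)) := by
  have hlt : IsTournament fun x y : ℤ => x < y := ⟨lt_irrefl, fun x y hxy => by lia⟩
  set A := outNbrs T (Ico w v) v
  have hlater : ∀ a ∈ A, #(outNbrs (· < ·) A a) ≤ #(inNbrs T (Ico (a + 1) v) v) := fun a _ => by
    grw [← h.card_outNbrs_le_card_inNbrs]
    refine card_le_card fun b hb => ?_
    simp only [A, mem_outNbrs, mem_Ico] at hb ⊢
    exact ⟨by lia, hb.1.2⟩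
  rw [← hlt.two_mul_sum_card_outNbrs A]
  refine Nat.mul_le_mul_left 2 ((sum_le_sum hlater).trans ?_)
  grw [← card_sigma, ← card_image_le (s := backPairs T I id) (f := Prod.swap), ← card_union_le]
  refine card_le_card_of_injOn (fun p => (p.2, p.1)) (fun p hp => ?_)
    fun p _ q _ hpq => Sigma.ext (congrArg Prod.snd hpq) (heq_of_eq (congrArg Prod.fst hpq))
  obtain ⟨ha, hb⟩ := mem_sigma.1 hp
  obtain ⟨ha, hva⟩ := mem_outNbrs.1 ha
  obtain ⟨hb, hbv⟩ := mem_inNbrs.1 hb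
  rw [mem_Ico] at ha hb
  have hIp : p.2 ∈ I ∧ p.1 ∈ I := ⟨hI (mem_Ico.2 (by lia)), hI (mem_Ico.2 (by lia))⟩
  rcases h.isTournament.total (show p.1 ≠ p.2 by lia) with hab | hba
  · exact mem_union_left _ (mem_trianglePairs.2 ⟨hIp, hbv, hva, hab⟩)
  · exact mem_union_right _
      (mem_image.2 ⟨(p.1, p.2), mem_backPairs.2 ⟨hIp.symm, show p.1 < p.2 by lia, hba⟩, rfl⟩)

lemma sq_card_le_of_leftHeavy (h : IsFreeMedian T) {s : ℕ} (hs : heavyConst ≤ s) {u v : ℤ}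
    (hv : v ∈ Ico u (u + 2 * s)) (hheavy : LeftHeavy T s v) :
    #(Ico (u - 4 * s) (u + 2 * s)) ^ 2 ≤
      18432 * #(trianglePairs T (Ico (u - 4 * s) (u + 2 * s)) v) := by
  rw [mem_Ico] at hv
  have hcard : #(Ico (u - 4 * s) (u + 2 * s)) = 6 * s := by
    rw [Int.card_Ico]
    lia
  have htri := h.card_outNbrs_mul_le (Ico_subset_Ico (by lia) (by lia) :
    Ico (v - 4 * s) v ⊆ Ico (u - 4 * s) (u + 2 * s))
  have hback := h.card_backPairs_Ico_le (u - 4 * s) (6 * s)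
  rw [show u - 4 * (s : ℤ) + (6 * s : ℕ) = u + 2 * s by push_cast; ring] at hback
  rw [hcard]
  rw [LeftHeavy] at hheavy
  generalize #(trianglePairs T (Ico (u - 4 * s) (u + 2 * s)) v) = t,
    #(backPairs T (Ico (u - 4 * s) (u + 2 * s)) id) = b,
    #(outNbrs T (Ico (v - 4 * s) v) v) = a at *
  rw [heavyConst] at hs
  have hpairs : s * s ≤ 256 * (t + b) := by
    calc s * s ≤ (8 * a) * (16 * (a - 1)) := Nat.mul_le_mul (by lia) (by lia)
      _ = 128 * (a * (a - 1)) := by ring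
      _ ≤ 256 * (t + b) := by lia
  have herror : rankError 36864 * (6 * s) ≤ s * s := by
    rw [← mul_assoc]
    exact Nat.mul_le_mul_right s (by lia)
  nlinarith

lemma card_leftHeavy_le (h : IsFreeMedian T) {s : ℕ} (hs : heavyConst ≤ s) (u : ℤ) :
    #{v ∈ Ico u (u + 2 * s) | LeftHeavy T s v} ≤ heavyConst := by
  by_contra! hmany
  refine h.free (h.isTournament.containsU_two_of_trianglePairs (K := 18432)
    (W := Ico (u - 4 * s) (u + 2 * s)) (by norm_num) ?_
    (le_heavyConst.trans hmany.le) fun v hv => ?_)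
  · rw [heavyConst] at hs
    rw [Int.card_Ico]
    lia
  · exact h.sq_card_le_of_leftHeavy hs (mem_filter.1 hv).1 (mem_filter.1 hv).2

lemma card_rightHeavy_le (h : IsFreeMedian T) {s : ℕ} (hs : heavyConst ≤ s) (u : ℤ) :
    #{v ∈ Ico u (u + 2 * s) | RightHeavy T s v} ≤ heavyConst := by
  have hneg : {v ∈ Ico u (u + 2 * s) | RightHeavy T s v} =
      -{v ∈ Ico (1 - u - 2 * s) (1 - u - 2 * s + 2 * s) | LeftHeavy (_root_.mirror T) s v} := by
    ext v
    simp only [mem_neg', mem_filter, leftHeavy_mirror, neg_neg, mem_Ico]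
    exact and_congr_left fun _ => by lia
  rw [hneg, card_neg]
  exact h.mirror.card_leftHeavy_le hs _

end IsFreeMedian

/-- `q → p` is a backward edge of length between `s` and `4 * s` from a vertex that is not left
heavy to a vertex that is not right heavy. -/
def LightBack (T : ℤ → ℤ → Prop) (s : ℕ) (p q : ℤ) : Prop :=
  T q p ∧ p + s ≤ q ∧ q ≤ p + 4 * s ∧ ¬ RightHeavy T s p ∧ ¬ LeftHeavy T s q

/-- Each vertex of `Y` sends at most one forward edge into `Y`. -/
def ForwardSparse (T : ℤ → ℤ → Prop) (Y : Finset ℤ) : Prop :=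
  ∀ y ∈ Y, #{z ∈ Y | y < z ∧ T y z} ≤ 1

lemma ForwardSparse.mono {T : ℤ → ℤ → Prop} {Y Y' : Finset ℤ} (hY : ForwardSparse T Y)
    (hsub : Y' ⊆ Y) : ForwardSparse T Y' := fun y hy =>
  (card_le_card (filter_subset_filter _ hsub)).trans (hY y (hsub hy))

lemma card_le_card_lt_add_card_Ico_add_card_ge {α : Type*} [LinearOrder α] [LocallyFiniteOrder α]
    (Y : Finset α) (u w : α) :
    #Y ≤ #{y ∈ Y | y < u} + #{y ∈ Y | y ∈ Ico u w} + #{y ∈ Y | w ≤ y} := by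
  grw [← card_union_le, ← card_union_le]
  refine card_le_card fun y hy => ?_
  simp only [mem_union, mem_filter, hy, true_and, mem_Ico]
  grind

namespace IsFreeMedian

variable {T : ℤ → ℤ → Prop}

/-- Almost all vertices between `{p, p'}` and `{q, q'}` are joined to all four by forward edges, and
two of them complete the backward four-cycle to a copy of `𝒰₂`. -/
lemma not_lightBack_rectangle (h : IsFreeMedian T) {s : ℕ} (hs : 16 ≤ s) {p p' q q' : ℤ}
    (hpp : p ≠ p') (hqq : q ≠ q') (hpq : LightBack T s p q) (hpq' : LightBack T s p q')
    (hp'q : LightBack T s p' q) : ¬ LightBack T s p' q' := fun hp'q' => by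
  have hT := h.isTournament
  obtain ⟨qp, hpq_ge, -, hp, hq⟩ := hpq
  obtain ⟨q'p', hp'q'_ge, -, hp', hq'⟩ := hp'q'
  obtain ⟨q'p, hpq'_ge, hpq'_le, -⟩ := hpq'
  obtain ⟨qp', hp'q_ge, hp'q_le, -⟩ := hp'q
  let exceptional := (inNbrs T (Ioc p (p + 4 * s)) p ∪ inNbrs T (Ioc p' (p' + 4 * s)) p') ∪
    (outNbrs T (Ico (q - 4 * s) q) q ∪ outNbrs T (Ico (q' - 4 * s) q') q')
  have hexceptional : 2 * #exceptional ≤ s := by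
    have := card_union_le (inNbrs T (Ioc p (p + 4 * s)) p ∪ inNbrs T (Ioc p' (p' + 4 * s)) p')
      (outNbrs T (Ico (q - 4 * s) q) q ∪ outNbrs T (Ico (q' - 4 * s) q') q')
    have := card_union_le (inNbrs T (Ioc p (p + 4 * s)) p) (inNbrs T (Ioc p' (p' + 4 * s)) p')
    have := card_union_le (outNbrs T (Ico (q - 4 * s) q) q) (outNbrs T (Ico (q' - 4 * s) q') q')
    unfold RightHeavy at hp hp'
    unfold LeftHeavy at hq hq'
    lia
  have hbetween : s ≤ #(Ioo (max p p') (min q q')) + 1 := by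
    rw [Int.card_Ioo]
    lia
  have hforward : ∀ z ∈ Ioo (max p p') (min q q') \ exceptional,
      T p z ∧ T p' z ∧ T z q ∧ T z q' := fun z hz => by
    simp only [exceptional, mem_sdiff, mem_union, mem_inNbrs, mem_outNbrs, mem_Ioo, mem_Ioc,
      mem_Ico, not_or, not_and, max_lt_iff, lt_min_iff] at hz
    obtain ⟨⟨⟨hz₁, hz₂⟩, hz₃, hz₄⟩, ⟨np, np'⟩, nq, nq'⟩ := hz
    exact ⟨hT.of_not (by lia) (np (by lia)), hT.of_not (by lia) (np' (by lia)),
      hT.of_not (by lia) (nq (by lia)), hT.of_not (by lia) (nq' (by lia))⟩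
  have hcard : 1 < #(Ioo (max p p') (min q q') \ exceptional) := by
    have := le_card_sdiff exceptional (Ioo (max p p') (min q q'))
    lia
  obtain ⟨z, hz, z', hz', hzz⟩ := one_lt_card.1 hcard
  obtain ⟨pz, p'z, zq, zq'⟩ := hforward z hz
  obtain ⟨pz', p'z', z'q, z'q'⟩ := hforward z' hz'
  exact h.free (hT.containsU_two hpp hzz hqq pz pz' p'z p'z' zq zq' z'q z'q' qp qp' q'p q'p')

lemma card_lt_of_forwardSparse_of_separated (h : IsFreeMedian T) {t : ℕ} (ht : heavyConst ≤ t)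
    {Y A B : Finset ℤ} (hY : ForwardSparse T Y) (hAY : A ⊆ Y) (hBY : B ⊆ Y) {u w : ℤ}
    (hAu : A ⊆ Ico u (u + 2 * t)) (hBw : B ⊆ Ico w (w + 2 * t))
    (hAB : ∀ a ∈ A, ∀ b ∈ B, a + t ≤ b ∧ b ≤ a + 4 * t) (hA : heavyConst + 4 ≤ #A) :
    #B < heavyConst + 4 := by
  by_contra! hB
  have hconst := le_heavyConst
  have hlightA : 1 < #{a ∈ A | ¬ RightHeavy T t a} := by
    have := card_filter_add_card_filter_not (s := A) (RightHeavy T t)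
    have := (card_le_card (filter_subset_filter _ hAu)).trans (h.card_rightHeavy_le ht u)
    lia
  obtain ⟨p, hp, p', hp', hpp⟩ := one_lt_card.1 hlightA
  rw [mem_filter] at hp hp'
  have hout : ∀ a ∈ A, #(outNbrs T B a) ≤ 1 := fun a ha =>
    (card_le_card fun b hb => mem_filter.2 ⟨hBY (mem_outNbrs.1 hb).1,
      by have := hAB a ha b (mem_outNbrs.1 hb).1; lia, (mem_outNbrs.1 hb).2⟩).trans (hY a (hAY ha))
  have hlightB : 1 < #(B \ (({b ∈ B | LeftHeavy T t b} ∪ outNbrs T B p) ∪ outNbrs T B p')) := by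
    have := le_card_sdiff (({b ∈ B | LeftHeavy T t b} ∪ outNbrs T B p) ∪ outNbrs T B p') B
    have := card_union_le ({b ∈ B | LeftHeavy T t b} ∪ outNbrs T B p) (outNbrs T B p')
    have := card_union_le {b ∈ B | LeftHeavy T t b} (outNbrs T B p)
    have := (card_le_card (filter_subset_filter _ hBw)).trans (h.card_leftHeavy_le ht w)
    have := hout p hp.1
    have := hout p' hp'.1
    lia
  obtain ⟨q, hq, q', hq', hqq⟩ := one_lt_card.1 hlightB
  simp only [mem_sdiff, mem_union, mem_filter, mem_outNbrs, not_or, not_and] at hq hq'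
  have hlightBack : ∀ a ∈ A, ¬ RightHeavy T t a → ∀ b ∈ B, ¬ LeftHeavy T t b → ¬ T a b →
      LightBack T t a b := fun a ha hra b hb hlb hab =>
    ⟨h.isTournament.of_not (by have := hAB a ha b hb; lia) hab, (hAB a ha b hb).1,
      (hAB a ha b hb).2, hra, hlb⟩
  obtain ⟨hqB, ⟨hlq, hpq⟩, hp'q⟩ := hq
  obtain ⟨hq'B, ⟨hlq', hpq'⟩, hp'q'⟩ := hq'
  exact h.not_lightBack_rectangle (by lia) hpp hqq
    (hlightBack p hp.1 hp.2 q hqB (hlq hqB) (hpq hqB))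
    (hlightBack p hp.1 hp.2 q' hq'B (hlq' hq'B) (hpq' hq'B))
    (hlightBack p' hp'.1 hp'.2 q hqB (hlq hqB) (hp'q hqB))
    (hlightBack p' hp'.1 hp'.2 q' hq'B (hlq' hq'B) (hp'q' hq'B))

lemma exists_card_le_of_forwardSparse (h : IsFreeMedian T) {t : ℕ} (ht : heavyConst ≤ t)
    {Y : Finset ℤ} (hY : ForwardSparse T Y) {u : ℤ} (hYu : Y ⊆ Ico u (u + 4 * t)) :
    ∃ w : ℤ, #Y ≤ #{y ∈ Y | y ∈ Ico w (w + 2 * t)} + 2 * (heavyConst + 4) := by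
  have hsep (w w' : ℤ) (hw : u + t ≤ w) (hw' : w + t = w') (hw'' : w' ≤ u + 3 * t) :
      #{y ∈ Y | y < w} < heavyConst + 4 ∨ #{y ∈ Y | w' ≤ y} < heavyConst + 4 := by
    refine or_iff_not_imp_left.2 fun hlow => h.card_lt_of_forwardSparse_of_separated ht hY
      (filter_subset _ _) (filter_subset _ _) (u := u) (w := u + 2 * t) (fun y hy => ?_)
      (fun y hy => ?_) (fun a ha b hb => ?_) (not_lt.1 hlow)
    · have := hYu (mem_filter.1 hy).1
      rw [mem_filter] at hy
      rw [mem_Ico] at this ⊢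
      lia
    · have := hYu (mem_filter.1 hy).1
      rw [mem_filter] at hy
      rw [mem_Ico] at this ⊢
      lia
    · have hau := hYu (mem_filter.1 ha).1
      have hbu := hYu (mem_filter.1 hb).1
      rw [mem_filter] at ha hb
      rw [mem_Ico] at hau hbu
      lia
  have hlow : #{y ∈ Y | y < u} = 0 := card_eq_zero.2 <| filter_eq_empty_iff.2 fun y hy =>
    (mem_Ico.1 (hYu hy)).1.not_gt
  have hhigh : #{y ∈ Y | u + 4 * t ≤ y} = 0 := card_eq_zero.2 <| filter_eq_empty_iff.2 fun y hy =>
    (mem_Ico.1 (hYu hy)).2.not_ge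
  have hfirst := card_le_card_lt_add_card_Ico_add_card_ge Y u (u + 2 * t)
  have hmiddle := card_le_card_lt_add_card_Ico_add_card_ge Y (u + t) (u + 3 * t)
  have hlast := card_le_card_lt_add_card_Ico_add_card_ge Y (u + 2 * t) (u + 4 * t)
  rcases hsep (u + t) (u + 2 * t) (by lia) (by lia) (by lia) with hfront | hback
  · rcases hsep (u + 2 * t) (u + 3 * t) (by lia) (by lia) (by lia) with hfront' | hback'
    · exact ⟨u + 2 * t, by rw [show u + 2 * t + 2 * (t : ℤ) = u + 4 * t by ring]; lia⟩
    · exact ⟨u + t, by rw [show u + t + 2 * (t : ℤ) = u + 3 * t by ring]; lia⟩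
  · exact ⟨u, by lia⟩

lemma card_le_of_forwardSparse (h : IsFreeMedian T) (j : ℕ) {u : ℤ} {Y : Finset ℤ}
    (hY : ForwardSparse T Y) (hYu : Y ⊆ Ico u (u + 2 ^ j)) : #Y ≤ 4 * heavyConst * (j + 1) := by
  have hconst := le_heavyConst
  induction j generalizing u Y with
  | zero =>
    have := card_le_card hYu
    rw [pow_zero, Int.card_Ico, add_sub_cancel_left, Int.toNat_one] at this
    lia
  | succ j ih =>
    by_cases hsmall : 2 ^ (j + 1) ≤ 4 * heavyConst
    · have hcard := card_le_card hYu
      have hpow : ((2 ^ (j + 1) : ℕ) : ℤ) = 2 ^ (j + 1) := Nat.cast_pow _ _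
      rw [Int.card_Ico, add_sub_cancel_left, ← hpow, Int.toNat_natCast] at hcard
      nlinarith
    obtain _ | i := j
    · lia
    have hdouble : (2 : ℤ) ^ (i + 1) = 2 * (2 ^ i : ℕ) := by push_cast; ring
    have hquadruple : (2 : ℤ) ^ (i + 1 + 1) = 4 * (2 ^ i : ℕ) := by push_cast; ring
    rw [hquadruple] at hYu
    obtain ⟨w, hw⟩ := h.exists_card_le_of_forwardSparse (by lia) hY hYu
    have := ih (u := w) (hY.mono (filter_subset _ _))
      fun y hy => by rw [hdouble]; exact (mem_filter.1 hy).2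
    lia

end IsFreeMedian

/-- The heads of the backward edges of length between `2 * s` and `3 * s` that leave `x`, except the
right heavy ones. -/
noncomputable def lightHeads (T : ℤ → ℤ → Prop) (s : ℕ) (x : ℤ) : Finset ℤ :=
  {y ∈ Icc (x - 3 * s) (x - 2 * s) | T x y ∧ ¬ RightHeavy T s y}

/-- The vertices of which we only use that there are few of them among the possible heads of the
backward edges of length between `2 * s` and `3 * s` that leave `x`: the right heavy ones, and the
light heads with at most one forward edge to another light head. -/
noncomputable def badHeads (T : ℤ → ℤ → Prop) (s : ℕ) (x : ℤ) : Finset ℤ :=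
  {y ∈ Icc (x - 3 * s) (x - 2 * s) | RightHeavy T s y} ∪
    {y ∈ lightHeads T s x | #{b ∈ lightHeads T s x | y < b ∧ T y b} ≤ 1}

/-- The backward edges inside `V` of length between `lo` and `hi`, as pairs (head, tail). -/
noncomputable def backEdges (T : ℤ → ℤ → Prop) (V : Finset ℤ) (lo hi : ℤ) : Finset (ℤ × ℤ) :=
  {e ∈ backPairs T V id | lo ≤ e.2 - e.1 ∧ e.2 - e.1 ≤ hi}

section BackEdges

variable {T : ℤ → ℤ → Prop}

lemma mem_lightHeads {s : ℕ} {x y : ℤ} :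
    y ∈ lightHeads T s x ↔ (x - 3 * s ≤ y ∧ y ≤ x - 2 * s) ∧ T x y ∧ ¬ RightHeavy T s y := by
  rw [lightHeads, mem_filter, mem_Icc]

lemma mem_backEdges {V : Finset ℤ} {lo hi : ℤ} {e : ℤ × ℤ} : e ∈ backEdges T V lo hi ↔
    ((e.1 ∈ V ∧ e.2 ∈ V) ∧ e.1 < e.2 ∧ T e.2 e.1) ∧ lo ≤ e.2 - e.1 ∧ e.2 - e.1 ≤ hi := by
  rw [backEdges, mem_filter, mem_backPairs]
  rfl

lemma card_backEdges_le_add (V : Finset ℤ) (lo mid hi : ℤ) :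
    #(backEdges T V lo hi) ≤ #(backEdges T V lo mid) + #(backEdges T V mid hi) := by
  grw [← card_union_le]
  refine card_le_card fun e he => ?_
  rw [mem_union, mem_backEdges, mem_backEdges]
  rw [mem_backEdges] at he
  exact (le_total (e.2 - e.1) mid).imp (⟨he.1, he.2.1, ·⟩) (⟨he.1, ·, he.2.2⟩)

lemma backEdges_subset (V : Finset ℤ) {lo hi hi' : ℤ} (hhi : hi ≤ hi') :
    backEdges T V lo hi ⊆ backEdges T V lo hi' := fun e he => by
  rw [mem_backEdges] at he ⊢
  exact ⟨he.1, he.2.1, he.2.2.trans hhi⟩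

lemma card_backEdges_le_mul (V : Finset ℤ) (lo : ℤ) (L : ℕ) :
    #(backEdges T V lo L) ≤ #V * L := by
  have hcover : backEdges T V lo L ⊆ V.biUnion fun x => Ico (x - L) x ×ˢ {x} := fun e he => by
    rw [mem_backEdges] at he
    simp only [mem_biUnion, mem_product, mem_Ico, mem_singleton]
    exact ⟨e.2, he.1.1.2, by lia, rfl⟩
  refine (card_le_card hcover).trans (card_biUnion_le_card_mul _ _ _ fun x _ => ?_)
  rw [card_product, card_singleton, mul_one, Int.card_Ico, sub_sub_cancel, Int.toNat_natCast]

end BackEdges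

namespace IsFreeMedian

variable {T : ℤ → ℤ → Prop}

lemma card_badHeads_le (h : IsFreeMedian T) {s j : ℕ} (hs : heavyConst ≤ s) (hj : s + 1 ≤ 2 ^ j)
    (x : ℤ) : #(badHeads T s x) ≤ 5 * heavyConst * (j + 1) := by
  have hconst := le_heavyConst
  have hheavy : #{y ∈ Icc (x - 3 * s) (x - 2 * s) | RightHeavy T s y} ≤ heavyConst := by
    grw [← h.card_rightHeavy_le hs (x - 3 * s)]
    exact card_le_card (filter_subset_filter _ fun y hy => by
      rw [mem_Icc] at hy; rw [mem_Ico]; lia)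
  have hlight : #{y ∈ lightHeads T s x | #{b ∈ lightHeads T s x | y < b ∧ T y b} ≤ 1} ≤
      4 * heavyConst * (j + 1) := by
    refine h.card_le_of_forwardSparse j (u := x - 3 * s) (fun y hy => ?_) fun y hy => ?_
    · exact (card_le_card (filter_subset_filter _ (filter_subset _ _))).trans (mem_filter.1 hy).2
    · have hpow : (s : ℤ) + 1 ≤ 2 ^ j := by exact_mod_cast hj
      rw [mem_filter, mem_lightHeads] at hy
      rw [mem_Ico]
      lia
  calc #(badHeads T s x) ≤ heavyConst + 4 * heavyConst * (j + 1) :=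
        (card_union_le _ _).trans (Nat.add_le_add hheavy hlight)
    _ ≤ 5 * heavyConst * (j + 1) := by nlinarith

/-- Otherwise `{y, x} → {b, b'} → {c, c'} → {y, x}` for two light heads `b`, `b'` after `y` and two
light tails `c`, `c'` before `x`, where `b → c` since there is no light backward rectangle. -/
lemma mem_badHeads_or (h : IsFreeMedian T) {s : ℕ} (hs : 16 ≤ s) {x y : ℤ} (hxy : T x y)
    (hlo : 2 * s ≤ x - y) (hhi : x - y ≤ 3 * s) :
    y ∈ badHeads T s x ∨ -x ∈ badHeads (_root_.mirror T) s (-y) := by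
  have hT := h.isTournament
  by_contra! hcon
  simp only [badHeads, mem_union, mem_filter, mem_lightHeads, mem_Icc, not_or, not_and, not_le,
    rightHeavy_mirror, neg_neg] at hcon
  obtain ⟨⟨hy, hy'⟩, hx, hx'⟩ := hcon
  have hyx : _root_.mirror T (-y) (-x) := by rwa [_root_.mirror, neg_neg, neg_neg]
  obtain ⟨b, hb, b', hb', hbb⟩ := one_lt_card.1 (hy' ⟨by lia, hxy, hy (by lia)⟩)
  obtain ⟨c, hc, c', hc', hcc⟩ := one_lt_card.1 (hx' ⟨by lia, hyx, hx (by lia)⟩)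
  simp only [mem_filter, mem_lightHeads, rightHeavy_mirror] at hb hb' hc hc'
  simp only [_root_.mirror, neg_neg] at hc hc'
  have hforward (b c : ℤ)
      (hb : ((x - 3 * s ≤ b ∧ b ≤ x - 2 * s) ∧ T x b ∧ ¬ RightHeavy T s b) ∧ y < b ∧ T y b)
      (hc : ((-y - 3 * s ≤ c ∧ c ≤ -y - 2 * s) ∧ T (-c) y ∧ ¬ LeftHeavy T s (-c)) ∧
        -x < c ∧ T (-c) x) : T b (-c) := by
    by_contra hbc
    obtain ⟨⟨hb₁, xb, hb₂⟩, hb₃, -⟩ := hb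
    obtain ⟨⟨hc₁, cy, hc₂⟩, hc₃, -⟩ := hc
    have cb : T (-c) b := hT.of_not (by lia) hbc
    exact h.not_lightBack_rectangle hs (p := y) (p' := b) (q := -c) (q' := x) (by lia) (by lia)
      ⟨cy, by lia, by lia, hy (by lia), hc₂⟩ ⟨hxy, by lia, by lia, hy (by lia), hx (by lia)⟩
      ⟨cb, by lia, by lia, hb₂, hc₂⟩ ⟨xb, by lia, by lia, hb₂, hx (by lia)⟩
  exact h.free (hT.containsU_two (show y ≠ x by lia) hbb (neg_injective.ne hcc)
    hb.2.2 hb'.2.2 hb.1.2.1 hb'.1.2.1 (hforward _ _ hb hc) (hforward _ _ hb hc')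
    (hforward _ _ hb' hc) (hforward _ _ hb' hc') hc.1.2.1 hc.2.2 hc'.1.2.1 hc'.2.2)

lemma card_backEdges_two_mul_three_mul_le (h : IsFreeMedian T) {s j : ℕ} (hs : heavyConst ≤ s)
    (hj : s + 1 ≤ 2 ^ j) (V : Finset ℤ) :
    #(backEdges T V (2 * s) (3 * s)) ≤ #V * (10 * heavyConst * (j + 1)) := by
  have hconst := le_heavyConst
  have hcover : backEdges T V (2 * s) (3 * s) ⊆ (V.biUnion fun x => badHeads T s x ×ˢ {x}) ∪
      V.biUnion fun y => {y} ×ˢ (-badHeads (_root_.mirror T) s (-y)) := fun e he => by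
    obtain ⟨⟨⟨hy, hx⟩, -, hxy⟩, hlo, hhi⟩ := mem_backEdges.1 he
    simp only [mem_union, mem_biUnion, mem_product, mem_singleton, mem_neg']
    exact (h.mem_badHeads_or (by lia) hxy hlo hhi).imp (⟨e.2, hx, ·, rfl⟩) (⟨e.1, hy, rfl, ·⟩)
  calc #(backEdges T V (2 * s) (3 * s))
      ≤ #V * (5 * heavyConst * (j + 1)) + #V * (5 * heavyConst * (j + 1)) := by
        refine (card_le_card hcover).trans ((card_union_le _ _).trans (Nat.add_le_add
          (card_biUnion_le_card_mul _ _ _ fun x _ => ?_)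
          (card_biUnion_le_card_mul _ _ _ fun y _ => ?_)))
        · rw [card_product, card_singleton, mul_one]
          exact h.card_badHeads_le hs hj x
        · rw [card_product, card_singleton, one_mul, card_neg]
          exact h.mirror.card_badHeads_le hs hj (-y)
    _ = #V * (10 * heavyConst * (j + 1)) := by ring

lemma card_backEdges_two_pow_le (h : IsFreeMedian T) (V : Finset ℤ) (J : ℕ) {k : ℕ} (hk : k ≤ J) :
    #(backEdges T V 0 (2 ^ k)) ≤ #V * (4 * heavyConst + k * (20 * heavyConst * (J + 1))) := by
  have hconst := le_heavyConst
  have hshort (k : ℕ) (hk : 2 ^ k ≤ 4 * heavyConst) :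
      #(backEdges T V 0 (2 ^ k)) ≤ #V * (4 * heavyConst) := by
    have hcast : ((2 ^ k : ℕ) : ℤ) = 2 ^ k := by push_cast; rfl
    exact hcast ▸ (card_backEdges_le_mul V 0 _).trans (Nat.mul_le_mul_left _ hk)
  induction k with
  | zero => exact (hshort 0 (by lia)).trans (Nat.mul_le_mul_left _ (Nat.le_add_right _ _))
  | succ k ih =>
    by_cases hsmall : 2 ^ (k + 1) ≤ 4 * heavyConst
    · exact (hshort _ hsmall).trans (Nat.mul_le_mul_left _ (Nat.le_add_right _ _))
    obtain _ | _ | i := k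
    · lia
    · lia
    have hpow : 2 ^ (i + 1 + 1 + 1) ≤ 2 ^ J := Nat.pow_le_pow_right two_pos hk
    have hscale₂ := h.card_backEdges_two_mul_three_mul_le (s := 2 * 2 ^ i) (j := J) (by lia)
      (by have := Nat.one_le_two_pow (n := i); lia) V
    have hscale₃ := h.card_backEdges_two_mul_three_mul_le (s := 3 * 2 ^ i) (j := J) (by lia)
      (by have := Nat.one_le_two_pow (n := i); lia) V
    push_cast at hscale₂ hscale₃
    calc #(backEdges T V 0 (2 ^ (i + 1 + 1 + 1)))
        ≤ #(backEdges T V 0 (3 * (3 * 2 ^ i))) :=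
          card_le_card (backEdges_subset V (by rw [pow_succ, pow_succ, pow_succ]; lia))
      _ ≤ #(backEdges T V 0 (2 ^ (i + 1 + 1))) +
            #(backEdges T V (2 * (2 * 2 ^ i)) (3 * (2 * 2 ^ i))) +
            #(backEdges T V (2 * (3 * 2 ^ i)) (3 * (3 * 2 ^ i))) := by
          rw [show (2 : ℤ) ^ (i + 1 + 1) = 2 * (2 * 2 ^ i) by ring,
            show 3 * (2 * (2 : ℤ) ^ i) = 2 * (3 * 2 ^ i) by ring]
          grw [card_backEdges_le_add V 0 (2 * (3 * 2 ^ i)),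
            card_backEdges_le_add V 0 (2 * (2 * 2 ^ i))]
      _ ≤ #V * (4 * heavyConst + (i + 1 + 1) * (20 * heavyConst * (J + 1))) +
            #V * (10 * heavyConst * (J + 1)) + #V * (10 * heavyConst * (J + 1)) :=
          Nat.add_le_add (Nat.add_le_add (ih (by lia)) hscale₂) hscale₃
      _ = #V * (4 * heavyConst + (i + 1 + 1 + 1) * (20 * heavyConst * (J + 1))) := by ring

end IsFreeMedian

/-- The extension along `e` of a tournament `T` on `V` in which all edges with an end outside the
range of `e` point forward. -/
def extendForward {V β : Type*} [LinearOrder β] (e : V → β) (T : V → V → Prop) (x y : β) : Prop :=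
  Relation.Map T e e x y ∨ ¬ (x ∈ Set.range e ∧ y ∈ Set.range e) ∧ x < y

/-- The position of `v` in the ordering `σ`, as an integer. -/
def position {V : Type*} {n : ℕ} (σ : Fin n ≃ V) (v : V) : ℤ := (σ.symm v : ℕ)

section Extension

variable {V β : Type*} [LinearOrder β] {T : V → V → Prop} {e : V → β}

lemma extendForward_apply (he : Function.Injective e) {v w : V} :
    extendForward e T (e v) (e w) ↔ T v w := by
  rw [extendForward, Relation.map_apply_apply he he, or_iff_left]
  exact fun h => h.1 ⟨Set.mem_range_self v, Set.mem_range_self w⟩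

lemma extendForward_iff_lt {x y : β} (h : ¬ (x ∈ Set.range e ∧ y ∈ Set.range e)) :
    extendForward e T x y ↔ x < y := by
  rw [extendForward, or_iff_right, and_iff_right h]
  rintro ⟨v, w, -, rfl, rfl⟩
  exact h ⟨Set.mem_range_self v, Set.mem_range_self w⟩

lemma mem_range_of_extendForward {x y : β} (hxy : x < y) (hyx : extendForward e T y x) :
    x ∈ Set.range e ∧ y ∈ Set.range e := by
  by_contra h
  exact hxy.not_gt ((extendForward_iff_lt (h ∘ And.symm)).1 hyx)

lemma IsTournament.extendForward (hT : IsTournament T) (he : Function.Injective e) :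
    IsTournament (extendForward e T) := by
  refine ⟨fun x => ?_, fun x y hxy => ?_⟩
  · by_cases h : x ∈ Set.range e
    · obtain ⟨v, rfl⟩ := h
      rw [extendForward_apply he]
      exact hT.1 v
    · rw [extendForward_iff_lt fun h' => h h'.1]
      exact lt_irrefl x
  · by_cases h : x ∈ Set.range e ∧ y ∈ Set.range e
    · obtain ⟨⟨v, rfl⟩, ⟨w, rfl⟩⟩ := h
      rw [extendForward_apply he, extendForward_apply he]
      exact hT.2 v w (ne_of_apply_ne e hxy)
    · rw [extendForward_iff_lt h, extendForward_iff_lt (h ∘ And.symm), not_lt]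
      exact hxy.le_iff_lt.symm

/-- Every vertex of `𝒰_t` lies on a directed triangle, and a directed triangle has both a backward
edge and a vertex between the ends of that edge. -/
lemma ContainsU.of_extendForward (he : Function.Injective e) (hrange : (Set.range e).OrdConnected)
    {t : ℕ} (h : ContainsU (extendForward e T) t) : ContainsU T t := by
  obtain ⟨f, hf, hedge⟩ := h
  have hnext : ∀ i : Fin 3, i - 1 = i + 1 + 1 := by decide
  have hmem : ∀ p, f p ∈ Set.range e := fun p => by
    by_contra hp
    have hlt₁ := hedge (p.1 - 1, p.2) p (.inr (sub_add_cancel _ _).symm)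
    have hlt₂ := hedge p (p.1 + 1, p.2) (.inr rfl)
    have hback := hedge (p.1 + 1, p.2) (p.1 - 1, p.2)
      (.inr (hnext p.1))
    rw [extendForward_iff_lt fun h => hp h.2] at hlt₁
    rw [extendForward_iff_lt fun h => hp h.1] at hlt₂
    obtain ⟨hmem₁, hmem₂⟩ := mem_range_of_extendForward (hlt₁.trans hlt₂) hback
    exact hp (hrange.out hmem₁ hmem₂ ⟨hlt₁.le, hlt₂.le⟩)
  choose g hg using hmem
  refine ⟨g, fun p q hpq => hf ?_, fun p q hpq => ?_⟩
  · rw [← hg p, ← hg q, hpq]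
  · rw [← extendForward_apply (T := T) he, hg, hg]
    exact hedge p q hpq

lemma backCount_eq_card_backPairs {α : Type*} [LinearOrder α] (he : Function.Injective e)
    {W : Finset β} (hW : (W : Set β) = Set.range e) {n : ℕ} {τ : Fin n ≃ V} {r : β → α}
    (hr : StrictMono (r ∘ e ∘ τ)) : backCount T τ = #(backPairs (extendForward e T) W r) := by
  have hmem (v : V) : e v ∈ W := mem_coe.1 (hW ▸ Set.mem_range_self v)
  rw [backCount, ← Set.ncard_coe_finset]
  refine Set.ncard_congr (fun p _ => (e (τ p.1), e (τ p.2))) (fun p hp => ?_)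
    (fun p q _ _ hpq => ?_) fun q hq => ?_
  · exact mem_coe.2 (mem_backPairs.2
      ⟨⟨hmem _, hmem _⟩, hr hp.1, (extendForward_apply he).2 hp.2⟩)
  · obtain ⟨h₁, h₂⟩ := Prod.mk.inj hpq
    exact Prod.ext (τ.injective (he h₁)) (τ.injective (he h₂))
  · obtain ⟨⟨hx, hy⟩, hlt, hyx⟩ := mem_backPairs.1 (mem_coe.1 hq)
    obtain ⟨v, hv⟩ : q.1 ∈ Set.range e := hW ▸ mem_coe.2 hx
    obtain ⟨w, hw⟩ : q.2 ∈ Set.range e := hW ▸ mem_coe.2 hy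
    refine ⟨(τ.symm v, τ.symm w), ⟨hr.lt_iff_lt.1 ?_, ?_⟩, ?_⟩
    · simpa [hv, hw] using hlt
    · simpa only [Equiv.apply_symm_apply, ← extendForward_apply (T := T) he, hv, hw] using hyx
    · simp only [Equiv.apply_symm_apply, hv, hw]

end Extension

/-- A ranking of `Ico u w` is extended to all vertices by leaving the vertices before `u` and after
`w` in place, which changes no backward edge with an end outside `Ico u w`. -/
lemma card_backPairs_Ico_le_of_minimal {β : Type*} [LinearOrder β] [LocallyFiniteOrder β]
    {T : β → β → Prop} {W : Finset β} (hW : ∀ x y, x < y → T y x → x ∈ W ∧ y ∈ W)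
    (hmin : ∀ r : β → ℕ ×ₗ β, Set.InjOn r W → #(backPairs T W id) ≤ #(backPairs T W r))
    {u w : β} {r : β → β} (hr : Set.InjOn r (Ico u w)) :
    #(backPairs T (Ico u w) id) ≤ #(backPairs T (Ico u w) r) := by
  let r' (x : β) : ℕ ×ₗ β :=
    if x < u then toLex (0, x) else if x < w then toLex (1, r x) else toLex (2, x)
  let rest := {p ∈ backPairs T W id | ¬ (p.1 ∈ Ico u w ∧ p.2 ∈ Ico u w)}
  have hr' : Set.InjOn r' W := fun x _ y _ hxy => by
    have hrxy := @hr x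
    simp only [r', coe_Ico, Set.mem_Ico] at hxy hrxy
    split_ifs at hxy <;> simp only [EmbeddingLike.apply_eq_iff_eq, Prod.mk.injEq] at hxy <;> grind
  have hlower : #(backPairs T (Ico u w) id) + #rest ≤ #(backPairs T W id) := by
    rw [← card_union_of_disjoint (disjoint_left.2 fun p hp hp' =>
      absurd (mem_backPairs.1 hp).1 (mem_filter.1 hp').2)]
    refine card_le_card (union_subset (fun p hp => ?_) (filter_subset _ _))
    obtain ⟨-, hlt, hback⟩ := mem_backPairs.1 hp
    exact mem_backPairs.2 ⟨hW _ _ hlt hback, hlt, hback⟩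
  have hupper : #(backPairs T W r') ≤ #(backPairs T (Ico u w) r) + #rest := by
    grw [← card_union_le]
    refine card_le_card fun p hp => ?_
    simp only [rest, mem_union, mem_filter, mem_backPairs, mem_Ico, r', id] at hp ⊢
    obtain ⟨hpW, hlt, hback⟩ := hp
    simp only [hpW, hback, true_and, and_true]
    split_ifs at hlt <;> rw [Prod.Lex.toLex_lt_toLex] at hlt <;> grind
  have := hmin r' hr'
  lia

lemma exists_equiv_strictMono_comp {V α : Type*} [LinearOrder α] {n : ℕ} (σ : Fin n ≃ V)
    {f : V → α} (hf : Function.Injective f) : ∃ τ : Fin n ≃ V, StrictMono (f ∘ τ) :=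
  ⟨(Tuple.sort (f ∘ σ)).trans σ, (Tuple.monotone_sort (f ∘ σ)).strictMono_of_injective
    ((hf.comp σ.injective).comp (Equiv.injective _))⟩

section Position

variable {V : Type*} {n : ℕ} {σ : Fin n ≃ V} {T : V → V → Prop}

lemma position_injective : Function.Injective (position σ) := fun _ _ h =>
  σ.symm.injective (Fin.ext (Nat.cast_injective h))

lemma coe_Ico_eq_range_position : (Ico (0 : ℤ) n : Set ℤ) = Set.range (position σ) := by
  ext x
  rw [coe_Ico, Set.mem_Ico]
  constructor
  · rintro ⟨hx, hxn⟩
    exact ⟨σ ⟨x.toNat, by lia⟩, by simp [position, hx]⟩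
  · rintro ⟨v, rfl⟩
    exact ⟨Nat.cast_nonneg _, Nat.cast_lt.2 (σ.symm v).isLt⟩

lemma backCount_eq_card_backPairs_id :
    backCount T σ = #(backPairs (extendForward (position σ) T) (Ico (0 : ℤ) n) id) :=
  backCount_eq_card_backPairs position_injective coe_Ico_eq_range_position
    fun i j hij => by simpa [position] using hij

lemma isFreeMedian_extendForward (hT : IsTournament T) (hfree : ¬ ContainsU T 2)
    (hσ : ∀ τ : Fin n ≃ V, backCount T σ ≤ backCount T τ) :
    IsFreeMedian (extendForward (position σ) T) where
  isTournament := hT.extendForward position_injective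
  free h := hfree (h.of_extendForward position_injective
    (by rw [← coe_Ico_eq_range_position, coe_Ico]; exact Set.ordConnected_Ico))
  minimal u w r hr := by
    refine card_backPairs_Ico_le_of_minimal (W := Ico (0 : ℤ) n) (fun x y hxy hyx => ?_)
      (fun r' hr' => ?_) hr
    · rw [← mem_coe, ← mem_coe, coe_Ico_eq_range_position]
      exact mem_range_of_extendForward hxy hyx
    · rw [coe_Ico_eq_range_position (σ := σ)] at hr'
      obtain ⟨τ, hτ⟩ := exists_equiv_strictMono_comp σ (f := r' ∘ position σ) fun v w hvw =>
        position_injective (hr' (Set.mem_range_self v) (Set.mem_range_self w) hvw)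
      rw [← backCount_eq_card_backPairs_id,
        ← backCount_eq_card_backPairs position_injective coe_Ico_eq_range_position hτ]
      exact hσ τ

end Position

lemma exists_backCount_le {V : Type*} {n : ℕ} (σ₀ : Fin n ≃ V) {T : V → V → Prop}
    (hT : IsTournament T) (hfree : ¬ ContainsU T 2) :
    ∃ σ : Fin n ≃ V, backCount T σ ≤ 44 * heavyConst * n * (Nat.log 2 n + 1) ^ 2 := by
  have := Finite.of_equiv _ σ₀
  have : Nonempty (Fin n ≃ V) := ⟨σ₀⟩
  obtain ⟨σ, hσ⟩ := Finite.exists_min fun σ : Fin n ≃ V => backCount T σ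
  have hmedian := isFreeMedian_extendForward hT hfree hσ
  refine ⟨σ, ?_⟩
  set J := Nat.log 2 n + 1
  have hJ : (n : ℤ) < 2 ^ J := by exact_mod_cast Nat.lt_pow_succ_log_self one_lt_two n
  have hshort : backPairs (extendForward (position σ) T) (Ico (0 : ℤ) n) id ⊆
      backEdges (extendForward (position σ) T) (Ico (0 : ℤ) n) 0 (2 ^ J) := fun e he => by
    obtain ⟨he', hlt, -⟩ := mem_backPairs.1 he
    rw [mem_Ico, mem_Ico] at he'
    rw [id, id] at hlt
    exact mem_filter.2 ⟨he, by lia, by lia⟩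
  have hcard : #(Ico (0 : ℤ) n) = n := by simp
  calc backCount T σ
      ≤ #(backEdges (extendForward (position σ) T) (Ico (0 : ℤ) n) 0 (2 ^ J)) :=
        backCount_eq_card_backPairs_id.trans_le (card_le_card hshort)
    _ ≤ n * (4 * heavyConst + J * (20 * heavyConst * (J + 1))) := by
        simpa only [hcard] using hmedian.card_backEdges_two_pow_le (Ico (0 : ℤ) n) J le_rfl
    _ ≤ n * (4 * heavyConst * J ^ 2 + J * (20 * heavyConst * (J + J))) := by
        have hJ₁ : 1 ≤ J := Nat.le_add_left _ _
        refine Nat.mul_le_mul_left _ (Nat.add_le_add ?_ (by gcongr))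
        exact Nat.le_mul_of_pos_right _ (Nat.pow_pos hJ₁)
    _ = 44 * heavyConst * n * J ^ 2 := by ring

lemma natLog_two_add_one_le {n : ℕ} (hn : 2 ≤ n) : (Nat.log 2 n + 1 : ℝ) ≤ 4 * Real.log n := by
  have hlog : (Nat.log 2 n : ℝ) * Real.log 2 ≤ Real.log n := by
    rw [← Real.log_pow]
    exact Real.log_le_log (by positivity) (by exact_mod_cast Nat.pow_log_le_self 2 (by lia))
  have hlog₂ : Real.log 2 ≤ Real.log n := Real.log_le_log two_pos (by exact_mod_cast hn)
  have := Real.log_two_gt_d9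
  have : (0 : ℝ) ≤ Nat.log 2 n := Nat.cast_nonneg _
  nlinarith

theorem statement18_general :
    ∃ C : ℝ, 0 < C ∧
      ∀ {V : Type*} {n : ℕ} {T : V → V → Prop}, 2 ≤ n → Nat.card V = n → IsTournament T →
        (∀ σ : Fin n ≃ V, C * n * Real.log n ^ 2 ≤ backCount T σ) → ContainsU T 2 := by
  have hconst : 0 < heavyConst := by
    have := le_heavyConst
    lia
  refine ⟨705 * heavyConst, by positivity, fun {V n T} hn hV hT hback => ?_⟩
  by_contra hfree
  have : Finite V := Nat.finite_of_card_ne_zero (by lia)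
  obtain ⟨σ, hσ⟩ := exists_backCount_le (Finite.equivFinOfCardEq hV).symm hT hfree
  have hlog : 0 < Real.log n := Real.log_pos (by exact_mod_cast hn)
  have hupper : (backCount T σ : ℝ) ≤ 704 * heavyConst * n * Real.log n ^ 2 := by
    calc (backCount T σ : ℝ) ≤ 44 * heavyConst * n * (Nat.log 2 n + 1) ^ 2 := by exact_mod_cast hσ
      _ ≤ 44 * heavyConst * n * (4 * Real.log n) ^ 2 := by
          gcongr
          exact natLog_two_add_one_le hn
      _ = 704 * heavyConst * n * Real.log n ^ 2 := by ring
  have hpos : 0 < heavyConst * (n * Real.log n ^ 2) := by positivity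
  linarith [hback σ]

/-- **Claim (upper bound for `𝒟(2, δ)`).** There is an absolute constant `C > 0` such that
every tournament on `n ≥ 2` vertices in which every ordering of the vertex set has at
least `C·n·(log n)²` backward edges contains a copy of `𝒰₂`. -/
theorem statement18 :
    ∃ C : ℝ, 0 < C ∧
      ∀ (n : ℕ) (T : Fin n → Fin n → Prop), 2 ≤ n → IsTournament T →
        (∀ σ : Equiv.Perm (Fin n),
          C * (n : ℝ) * (Real.log (n : ℝ)) ^ 2 ≤ (backCount T σ : ℝ)) →
        ContainsU T 2 := by
  obtain ⟨C, hC, hcontains⟩ := statement18_general.{0}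
  exact ⟨C, hC, fun n T hn hT hback => hcontains hn (Nat.card_fin n) hT hback⟩
end
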